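/- arXiv:2509.21174 — 4 statements merged into one kernel-verified Lean document; each statement's English description precedes it below -/
import Mathlib

section
/- Let W = Σ_{i=1}^n X_i X_iᵀ where X_1,…,X_n are i.i.d. N(0, Σ) in ℝ^d with Σ positive definite, and suppose d > n + 1. Then E[Tr(W†)] ≤ (n / (d(d - n - 1))) · Tr(Σ⁻¹), where W† is the Moore–Penrose pseudoinverse. -/
open Matrix MeasureTheory ProbabilityTheory BigOperators

/-- `B` is the Moore–Penrose pseudoinverse of `A` (the four Penrose conditions, which
characterize it uniquely). -/
def IsMoorePenrose {d : ℕ} (A B : Matrix (Fin d) (Fin d) ℝ) : Prop :=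
  A * B * A = A ∧ B * A * B = B ∧ (A * B)ᵀ = A * B ∧ (B * A)ᵀ = B * A

namespace WishartAux
variable {d n : ℕ}

/-- regularised inverse Gram matrix -/
noncomputable def G (e : ℝ) (Z : Matrix (Fin d) (Fin n) ℝ) : Matrix (Fin n) (Fin n) ℝ :=
  (Zᵀ * Z + e • (1 : Matrix (Fin n) (Fin n) ℝ))⁻¹
noncomputable def H (e : ℝ) (Z : Matrix (Fin d) (Fin n) ℝ) : Matrix (Fin d) (Fin n) ℝ :=
  Z * G e Z
noncomputable def T (e : ℝ) (Z : Matrix (Fin d) (Fin n) ℝ) : Matrix (Fin d) (Fin d) ℝ :=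
  1 - Z * G e Z * Zᵀ
noncomputable def K (e : ℝ) (Z : Matrix (Fin d) (Fin n) ℝ) : Matrix (Fin d) (Fin d) ℝ :=
  H e Z * (H e Z)ᵀ

lemma posDef_M {e : ℝ} (he : 0 < e) (Z : Matrix (Fin d) (Fin n) ℝ) :
    (Zᵀ * Z + e • (1 : Matrix (Fin n) (Fin n) ℝ)).PosDef := by
  have h1 : (Zᵀ * Z).PosSemidef := by
    simpa [conjTranspose_eq_transpose_of_trivial] using posSemidef_conjTranspose_mul_self Z
  exact PosDef.posSemidef_add h1 (PosDef.one.smul he)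

lemma det_M_ne {e : ℝ} (he : 0 < e) (Z : Matrix (Fin d) (Fin n) ℝ) :
    (Zᵀ * Z + e • (1 : Matrix (Fin n) (Fin n) ℝ)).det ≠ 0 := (posDef_M he Z).det_pos.ne'

lemma M_mul_G {e : ℝ} (he : 0 < e) (Z : Matrix (Fin d) (Fin n) ℝ) :
    (Zᵀ * Z + e • (1 : Matrix (Fin n) (Fin n) ℝ)) * G e Z = 1 :=
  mul_nonsing_inv _ (det_M_ne he Z).isUnit

lemma G_mul_M {e : ℝ} (he : 0 < e) (Z : Matrix (Fin d) (Fin n) ℝ) :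
    G e Z * (Zᵀ * Z + e • (1 : Matrix (Fin n) (Fin n) ℝ)) = 1 :=
  nonsing_inv_mul _ (det_M_ne he Z).isUnit

lemma ZZG {e : ℝ} (he : 0 < e) (Z : Matrix (Fin d) (Fin n) ℝ) :
    Zᵀ * Z * G e Z = 1 - e • G e Z := by
  have := M_mul_G he Z
  rw [add_mul, smul_mul_assoc, one_mul] at this
  exact eq_sub_of_add_eq this

lemma GZZ {e : ℝ} (he : 0 < e) (Z : Matrix (Fin d) (Fin n) ℝ) :
    G e Z * (Zᵀ * Z) = 1 - e • G e Z := by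
  have := G_mul_M he Z
  rw [mul_add, mul_smul_comm, mul_one] at this
  exact eq_sub_of_add_eq this

lemma G_symm (e : ℝ) (Z : Matrix (Fin d) (Fin n) ℝ) : (G e Z)ᵀ = G e Z := by
  simp [G, transpose_nonsing_inv, transpose_add, transpose_mul]

lemma T_symm (e : ℝ) (Z : Matrix (Fin d) (Fin n) ℝ) : (T e Z)ᵀ = T e Z := by
  simp [T, transpose_mul, G_symm, Matrix.mul_assoc]

lemma T_eq {e : ℝ} (he : 0 < e) (Z : Matrix (Fin d) (Fin n) ℝ) :
    T e Z = T e Z * (T e Z)ᵀ + e • K e Z := by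
  rw [T_symm]
  have h : Z * G e Z * Zᵀ * (Z * G e Z * Zᵀ) = Z * G e Z * Zᵀ - e • K e Z := by
    calc Z * G e Z * Zᵀ * (Z * G e Z * Zᵀ) = Z * G e Z * (Zᵀ * Z * G e Z) * Zᵀ := by
          simp only [Matrix.mul_assoc]
      _ = _ := by
          rw [ZZG he]
          simp [K, H, Matrix.mul_sub, Matrix.sub_mul, transpose_mul, G_symm, Matrix.mul_assoc]
  simp only [T] at *
  rw [sub_mul, mul_sub, mul_sub, h]
  simp

lemma trace_K {e : ℝ} (he : 0 < e) (Z : Matrix (Fin d) (Fin n) ℝ) :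
    (K e Z).trace = (G e Z).trace - e * (G e Z * (G e Z)ᵀ).trace := by
  have : (H e Z)ᵀ * H e Z = G e Z - e • (G e Z * (G e Z)ᵀ) := by
    calc (H e Z)ᵀ * H e Z = G e Z * (Zᵀ * Z * G e Z) := by
          simp [H, transpose_mul, G_symm, Matrix.mul_assoc]
      _ = _ := by rw [ZZG he]; simp [mul_sub, G_symm]
  rw [K, trace_mul_comm, this]; simp

lemma mul_transpose_diag_nonneg {m k : ℕ} (A : Matrix (Fin m) (Fin k) ℝ) (a : Fin m) :
    0 ≤ (A * Aᵀ) a a := by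
  simp only [mul_apply, transpose_apply]
  exact Finset.sum_nonneg fun i _ => mul_self_nonneg _

lemma mul_transpose_trace_nonneg {m k : ℕ} (A : Matrix (Fin m) (Fin k) ℝ) :
    0 ≤ (A * Aᵀ).trace := Finset.sum_nonneg fun a _ => mul_transpose_diag_nonneg A a

lemma G_eq {e : ℝ} (he : 0 < e) (Z : Matrix (Fin d) (Fin n) ℝ) :
    G e Z = (H e Z)ᵀ * ((H e Z)ᵀ)ᵀ + e • (G e Z * (G e Z)ᵀ) := by
  have : (H e Z)ᵀ * ((H e Z)ᵀ)ᵀ = G e Z - e • (G e Z * (G e Z)ᵀ) := by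
    calc (H e Z)ᵀ * ((H e Z)ᵀ)ᵀ = G e Z * (Zᵀ * Z * G e Z) := by
          simp [H, transpose_mul, G_symm, Matrix.mul_assoc]
      _ = _ := by rw [ZZG he]; simp [mul_sub, G_symm]
  rw [this]; simp

lemma sq_le_diag {m k : ℕ} (A : Matrix (Fin m) (Fin k) ℝ) (a : Fin m) (i : Fin k) :
    (A a i)^2 ≤ (A * Aᵀ) a a := by
  simp only [mul_apply, transpose_apply]
  rw [pow_two]
  exact Finset.single_le_sum (f := fun i => A a i * A a i) (fun i _ => mul_self_nonneg _)
    (Finset.mem_univ i)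

lemma G_diag_nonneg {e : ℝ} (he : 0 < e) (Z : Matrix (Fin d) (Fin n) ℝ) (i) : 0 ≤ G e Z i i := by
  rw [G_eq he]
  simp only [Matrix.add_apply, Matrix.smul_apply, smul_eq_mul]
  have := mul_transpose_diag_nonneg (H e Z)ᵀ i
  have := mul_transpose_diag_nonneg (G e Z) i
  positivity

lemma G_diag_le {e : ℝ} (he : 0 < e) (Z : Matrix (Fin d) (Fin n) ℝ) (i) : G e Z i i ≤ 1 / e := by
  have h := congrFun (congrFun (G_eq he Z) i) i
  simp only [Matrix.add_apply, Matrix.smul_apply, smul_eq_mul] at h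
  have h1 := mul_transpose_diag_nonneg (H e Z)ᵀ i
  have h2 := sq_le_diag (G e Z) i i
  have h3 : e * (G e Z i i)^2 ≤ G e Z i i := by nlinarith
  rw [le_div_iff₀ he]
  by_contra hc
  push Not at hc
  nlinarith [G_diag_nonneg he Z i]

lemma T_diag_nonneg {e : ℝ} (he : 0 < e) (Z : Matrix (Fin d) (Fin n) ℝ) (a) : 0 ≤ T e Z a a := by
  rw [T_eq he]
  simp only [Matrix.add_apply, Matrix.smul_apply, smul_eq_mul]
  have := mul_transpose_diag_nonneg (H e Z) a
  have := mul_transpose_diag_nonneg (T e Z) a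
  simp only [K]
  positivity

lemma T_diag_le {e : ℝ} (he : 0 < e) (Z : Matrix (Fin d) (Fin n) ℝ) (a) : T e Z a a ≤ 1 := by
  have h := congrFun (congrFun (T_eq he Z) a) a
  have h1 := mul_transpose_diag_nonneg (H e Z) a
  have h2 := sq_le_diag (T e Z) a a
  simp only [Matrix.add_apply, Matrix.smul_apply, smul_eq_mul, K] at h
  nlinarith [mul_nonneg he.le h1]

lemma K_diag_nonneg (e : ℝ) (Z : Matrix (Fin d) (Fin n) ℝ) (a) : 0 ≤ K e Z a a :=
  mul_transpose_diag_nonneg _ _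

lemma K_diag_le {e : ℝ} (he : 0 < e) (Z : Matrix (Fin d) (Fin n) ℝ) (a) : K e Z a a ≤ 1 / e := by
  have h := congrFun (congrFun (T_eq he Z) a) a
  have h1 := T_diag_le he Z a
  have h2 := mul_transpose_diag_nonneg (T e Z) a
  simp only [Matrix.add_apply, Matrix.smul_apply, smul_eq_mul] at h
  rw [le_div_iff₀ he]
  nlinarith

lemma H_sq_le {e : ℝ} (he : 0 < e) (Z : Matrix (Fin d) (Fin n) ℝ) (a i) :
    (H e Z a i)^2 ≤ 1 / e := (sq_le_diag _ _ _).trans (K_diag_le he Z a)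

lemma trace_K_le_G {e : ℝ} (he : 0 < e) (Z : Matrix (Fin d) (Fin n) ℝ) :
    (K e Z).trace ≤ (G e Z).trace := by
  rw [trace_K he]
  nlinarith [mul_nonneg he.le (mul_transpose_trace_nonneg (G e Z))]

/-- divergence -/
noncomputable def D (e : ℝ) (a : Fin d) (i : Fin n) (Z : Matrix (Fin d) (Fin n) ℝ) : ℝ :=
  T e Z a a * G e Z i i - (H e Z a i) ^ 2

lemma trace_ZH {e : ℝ} (he : 0 < e) (Z : Matrix (Fin d) (Fin n) ℝ) :
    ∑ a, ∑ i, Z a i * H e Z a i = n - e * (G e Z).trace := by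
  have : (Zᵀ * H e Z).trace = n - e * (G e Z).trace := by
    rw [H, ← Matrix.mul_assoc, ZZG he]; simp
  rw [← this, Finset.sum_comm]
  simp [trace, mul_apply]

lemma trace_T {e : ℝ} (he : 0 < e) (Z : Matrix (Fin d) (Fin n) ℝ) :
    (T e Z).trace = d - (n - e * (G e Z).trace) := by
  rw [T, trace_sub, trace_mul_comm, ← Matrix.mul_assoc, ZZG he]; simp

lemma G_trace_nonneg {e : ℝ} (he : 0 < e) (Z : Matrix (Fin d) (Fin n) ℝ) : 0 ≤ (G e Z).trace :=
  Finset.sum_nonneg fun i _ => G_diag_nonneg he Z i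

lemma sum_D {e : ℝ} (he : 0 < e) (hd : n + 1 < d) (Z : Matrix (Fin d) (Fin n) ℝ) :
    ((d : ℝ) - n - 1) * (K e Z).trace ≤ ∑ a, ∑ i, D e a i Z := by
  have h1 : ∑ a, ∑ i, D e a i Z = (T e Z).trace * (G e Z).trace - (K e Z).trace := by
    simp only [D, Finset.sum_sub_distrib, trace, Finset.sum_mul_sum, diag_apply, K, mul_apply,
      transpose_apply, pow_two]
  rw [h1, trace_T he]
  have h2 := trace_K_le_G he Z
  have h3 := G_trace_nonneg he Z
  have hd' : (n : ℝ) + 1 < d := by exact_mod_cast hd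
  nlinarith [mul_nonneg he.le (mul_nonneg h3 h3), mul_le_mul_of_nonneg_left h2 (by linarith : (0:ℝ) ≤ d - n)]

lemma continuous_G {e : ℝ} (he : 0 < e) :
    Continuous (G e : Matrix (Fin d) (Fin n) ℝ → _) := by
  have hM : Continuous fun Z : Matrix (Fin d) (Fin n) ℝ =>
      Zᵀ * Z + e • (1 : Matrix (Fin n) (Fin n) ℝ) := by fun_prop
  unfold G
  simp only [Matrix.inv_def, Ring.inverse_eq_inv']
  exact (hM.matrix_det.inv₀ (det_M_ne he)).smul hM.matrix_adjugate

lemma continuous_H {e : ℝ} (he : 0 < e) :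
    Continuous (H e : Matrix (Fin d) (Fin n) ℝ → _) :=
  continuous_id.matrix_mul (continuous_G he)

lemma continuous_T {e : ℝ} (he : 0 < e) :
    Continuous (T e : Matrix (Fin d) (Fin n) ℝ → _) :=
  continuous_const.sub ((continuous_H he).matrix_mul continuous_id.matrix_transpose)

lemma continuous_K {e : ℝ} (he : 0 < e) :
    Continuous (K e : Matrix (Fin d) (Fin n) ℝ → _) :=
  (continuous_H he).matrix_mul (continuous_H he).matrix_transpose

lemma continuous_D {e : ℝ} (he : 0 < e) (a i) :
    Continuous (D e a i : Matrix (Fin d) (Fin n) ℝ → _) :=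
  (((continuous_T he).matrix_elem a a).mul ((continuous_G he).matrix_elem i i)).sub
    (((continuous_H he).matrix_elem a i).pow 2)

lemma H_diff {e : ℝ} (he : 0 < e) (Z Y E : Matrix (Fin d) (Fin n) ℝ) (r : ℝ) (hY : Y = Z + r • E) :
    H e Y - H e Z = r • (T e Y * E * G e Z - H e Y * Eᵀ * H e Z) := by
  have hG : G e Y - G e Z = - (r • (G e Y * (Eᵀ * Z + Yᵀ * E) * G e Z)) := by
    have : G e Y - G e Z = G e Y * ((Zᵀ * Z + e • 1) - (Yᵀ * Y + e • 1)) * G e Z := by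
      rw [mul_sub, sub_mul, G_mul_M he, one_mul, Matrix.mul_assoc, M_mul_G he, mul_one]
    rw [this]
    have h2 : (Zᵀ * Z + e • 1) - (Yᵀ * Y + e • (1 : Matrix (Fin n) (Fin n) ℝ)) =
        - (r • (Eᵀ * Z + Yᵀ * E)) := by
      rw [hY]
      simp only [transpose_add, transpose_smul, Matrix.add_mul, Matrix.mul_add, smul_add,
        Matrix.smul_mul, Matrix.mul_smul]
      abel
    rw [h2, Matrix.mul_neg, Matrix.neg_mul, Matrix.mul_smul, Matrix.smul_mul]
  have : H e Y - H e Z = (Y - Z) * G e Z + Y * (G e Y - G e Z) := by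
    simp only [H, Matrix.mul_sub, Matrix.sub_mul]; abel
  have hYZ : Y - Z = r • E := by rw [hY]; abel
  rw [this, hG, hYZ]
  simp only [T, H, Matrix.sub_mul, Matrix.one_mul, Matrix.mul_add, Matrix.add_mul, smul_add,
    smul_sub, Matrix.smul_mul, Matrix.mul_neg, Matrix.mul_smul, Matrix.mul_assoc]
  abel

lemma hasDeriv_H {e : ℝ} (he : 0 < e) (a : Fin d) (i : Fin n) (Z : ℝ → Matrix (Fin d) (Fin n) ℝ)
    (hZ : ∀ s t, Z t = Z s + (t - s) • Matrix.single a i 1) (t : ℝ) :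
    HasDerivAt (fun s => H e (Z s) a i) (D e a i (Z t)) t := by
  have hcont : Continuous Z := by
    have : Z = fun s => Z 0 + (s - 0) • Matrix.single a i 1 := funext fun s => hZ 0 s
    rw [this]; fun_prop
  rw [hasDerivAt_iff_tendsto_slope]
  have key : ∀ s, s ≠ t → T e (Z s) a a * G e (Z t) i i - H e (Z s) a i * H e (Z t) a i =
      slope (fun s => H e (Z s) a i) t s := by
    intro s hs
    have h := congrFun (congrFun (H_diff he (Z t) (Z s) _ _ (hZ t s)) a) i
    rw [slope_def_field, eq_div_iff (sub_ne_zero.2 hs), mul_comm]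
    simp only [Matrix.sub_apply, Matrix.smul_apply, smul_eq_mul, transpose_single] at h
    rw [h]
    simp [mul_apply, single_apply, Finset.sum_ite_eq, ite_and]
  have hc : Continuous fun s => T e (Z s) a a * G e (Z t) i i - H e (Z s) a i * H e (Z t) a i :=
    ((((continuous_T he).comp hcont).matrix_elem a a).mul continuous_const).sub
      ((((continuous_H he).comp hcont).matrix_elem a i).mul continuous_const)
  have h2 := (hc.tendsto t).mono_left (nhdsWithin_le_nhds (s := {t}ᶜ))
  have h3 : D e a i (Z t) = T e (Z t) a a * G e (Z t) i i - H e (Z t) a i * H e (Z t) a i := by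
    simp [D, pow_two]
  rw [h3]
  refine h2.congr' ?_
  filter_upwards [self_mem_nhdsWithin] with s hs using key s hs

/-- the pointwise bound -/
lemma pointwise {e : ℝ} (he : 0 < e) (Z : Matrix (Fin d) (Fin n) ℝ)
    (A B V : Matrix (Fin d) (Fin d) ℝ) (hBA : B * A = 1)
    (hV : IsMoorePenrose (A * (Z * Zᵀ) * Aᵀ) V) :
    V.trace ≤ (Bᵀ * K e Z * B).trace + 2 * e * (V * A * (V * A)ᵀ).trace := by
  obtain ⟨h1, h2, h3, h4⟩ := hV
  set W := A * (Z * Zᵀ) * Aᵀ with hW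
  have hWs : Wᵀ = W := by
    simp [hW, transpose_mul, Matrix.mul_assoc]
  set Q := V * W with hQ
  have hQQ : Q * Q = Q := by rw [hQ, ← Matrix.mul_assoc, h2]
  have hWV : W * Vᵀ = Q := by
    rw [← h4, hQ, transpose_mul, hWs]
  have t1 : V.trace = (V * W * Vᵀ).trace := by
    rw [Matrix.mul_assoc, hWV, hQ, trace_mul_comm, h2]
  have hAB : Aᵀ * Bᵀ = 1 := by rw [← transpose_mul, hBA, transpose_one]
  -- the resolvent identity
  have hres : Z * Zᵀ * K e Z * (Z * Zᵀ) = Z * Zᵀ - (2 * e) • (1 - T e Z) + (e * e) • K e Z := by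
    have hA : Z * Zᵀ * K e Z * (Z * Zᵀ) = Z * ((Zᵀ * Z * G e Z) * (G e Z * (Zᵀ * Z))) * Zᵀ := by
      simp [K, H, transpose_mul, G_symm, Matrix.mul_assoc]
    rw [hA, ZZG he, GZZ he]
    simp only [T, K, H, transpose_mul, G_symm, sub_sub_cancel, Matrix.sub_mul, Matrix.mul_sub,
      Matrix.one_mul, Matrix.mul_one, Matrix.smul_mul, Matrix.mul_smul, Matrix.mul_assoc, smul_sub,
      mul_smul, two_smul]
    abel
  have hQB : Q * Bᵀ = V * A * (Z * Zᵀ) := by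
    rw [hQ, hW]
    simp only [Matrix.mul_assoc]
    rw [hAB, Matrix.mul_one]
  have hBQ : B * Qᵀ = Z * Zᵀ * (V * A)ᵀ := by
    have := congrArg transpose hQB
    simpa [transpose_mul, Matrix.mul_assoc] using this
  set L := V * A with hL
  have hV2 : V * W * Vᵀ = L * (Z * Zᵀ) * Lᵀ := by
    simp [hW, hL, transpose_mul, Matrix.mul_assoc]
  have hZZ : Z * Zᵀ = Z * Zᵀ * K e Z * (Z * Zᵀ) + (2 * e) • (1 - T e Z) - (e * e) • K e Z := by
    rw [hres]; abel
  have t2 : (L * (Z * Zᵀ) * Lᵀ).trace = (Q * (Bᵀ * K e Z * B) * Qᵀ).trace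
      + 2 * e * ((L * Lᵀ).trace - (L * T e Z * Lᵀ).trace) - e * e * (L * K e Z * Lᵀ).trace := by
    have e1 : Q * (Bᵀ * K e Z * B) * Qᵀ = L * (Z * Zᵀ * K e Z * (Z * Zᵀ)) * Lᵀ := by
      calc Q * (Bᵀ * K e Z * B) * Qᵀ = (Q * Bᵀ) * K e Z * (B * Qᵀ) := by
            simp only [Matrix.mul_assoc]
        _ = _ := by rw [hQB, hBQ]; simp only [Matrix.mul_assoc]
    rw [e1]
    conv_lhs => rw [hZZ]
    simp only [Matrix.mul_add, Matrix.add_mul, Matrix.mul_sub, Matrix.sub_mul, Matrix.smul_mul,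
      Matrix.mul_smul, trace_add, trace_sub, trace_smul, Matrix.mul_one, smul_eq_mul]
  have t3 : 0 ≤ (L * K e Z * Lᵀ).trace := by
    have := mul_transpose_trace_nonneg (L * H e Z)
    simpa [K, transpose_mul, Matrix.mul_assoc] using this
  have t4 : 0 ≤ (L * T e Z * Lᵀ).trace := by
    have h5 : L * T e Z * Lᵀ = (L * T e Z) * (L * T e Z)ᵀ + e • (L * K e Z * Lᵀ) := by
      conv_lhs => rw [T_eq he]
      simp only [Matrix.mul_add, Matrix.add_mul, Matrix.smul_mul, Matrix.mul_smul, transpose_mul,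
        Matrix.mul_assoc]
    rw [h5, trace_add, trace_smul, smul_eq_mul]
    have := mul_transpose_trace_nonneg (L * T e Z)
    positivity
  have t5 : (Q * (Bᵀ * K e Z * B) * Qᵀ).trace ≤ (Bᵀ * K e Z * B).trace := by
    have h6 := mul_transpose_trace_nonneg ((1 - Q) * (Bᵀ * H e Z))
    set S := Bᵀ * H e Z with hS
    have h7 : Bᵀ * K e Z * B = S * Sᵀ := by
      simp [hS, K, transpose_mul, Matrix.mul_assoc]
    have h8 : ((1 - Q) * S * ((1 - Q) * S)ᵀ).trace = (S * Sᵀ).trace - (Q * (S * Sᵀ)).trace := by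
      have h9 : (1 - Q) * (1 - Q) = 1 - Q := by
        rw [mul_sub, sub_mul, sub_mul, hQQ]; simp
      rw [transpose_mul, transpose_sub, h4, transpose_one, ← Matrix.mul_assoc, trace_mul_comm,
        ← Matrix.mul_assoc, ← Matrix.mul_assoc, h9, Matrix.mul_assoc, Matrix.sub_mul,
        Matrix.one_mul, trace_sub]
    have h10 : (Q * (S * Sᵀ) * Qᵀ).trace = (Q * (S * Sᵀ)).trace := by
      rw [h4, trace_mul_comm, ← Matrix.mul_assoc, hQQ]
    rw [h7, h10]
    linarith
  rw [t1, hV2, t2]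
  nlinarith [mul_nonneg he.le t4, mul_nonneg (mul_nonneg he.le he.le) t3]

/-! ### Gaussian integration by parts -/

lemma hasDeriv_pdf (x : ℝ) :
    HasDerivAt (gaussianPDFReal 0 1) (-(x * gaussianPDFReal 0 1 x)) x := by
  have h : gaussianPDFReal 0 1 = fun x : ℝ => (√(2 * Real.pi))⁻¹ * Real.exp (-x ^ 2 / 2) := by
    ext x; simp [gaussianPDFReal]
  rw [h]
  have h1 : HasDerivAt (fun x : ℝ => -x ^ 2 / 2) (-x) x := by
    have := ((hasDerivAt_pow 2 x).fun_neg).div_const 2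
    exact this.congr_deriv (by simp; ring)
  have := (h1.exp).const_mul (√(2 * Real.pi))⁻¹
  exact this.congr_deriv (by ring)

lemma integrable_id_pdf : Integrable (fun x : ℝ => x * gaussianPDFReal 0 1 x) := by
  have h : (fun x : ℝ => x * gaussianPDFReal 0 1 x) =
      fun x : ℝ => (√(2 * Real.pi))⁻¹ * (x * Real.exp (-(1/2) * x ^ 2)) := by
    ext x; simp [gaussianPDFReal]; ring_nf
  rw [h]
  exact (integrable_mul_exp_neg_mul_sq (by norm_num)).const_mul _

lemma stein_one (f f' : ℝ → ℝ) (C C' : ℝ) (hf : ∀ x, HasDerivAt f (f' x) x)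
    (hC : ∀ x, |f x| ≤ C) (hC' : ∀ x, |f' x| ≤ C') (hm : Measurable f') :
    ∫ x, x * f x ∂(gaussianReal 0 1) = ∫ x, f' x ∂(gaussianReal 0 1) := by
  have hfc : Continuous f := continuous_iff_continuousAt.2 fun x => (hf x).continuousAt
  rw [integral_gaussianReal_eq_integral_smul one_ne_zero,
    integral_gaussianReal_eq_integral_smul one_ne_zero]
  have i1 : Integrable (f * fun x => -(x * gaussianPDFReal 0 1 x)) :=
    (integrable_id_pdf.neg).bdd_mul (c := C) hfc.aestronglyMeasurable
      (Filter.Eventually.of_forall fun x => by simpa using hC x)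
  have i2 : Integrable (f' * gaussianPDFReal 0 1) :=
    (integrable_gaussianPDFReal 0 1).bdd_mul (c := C') hm.aestronglyMeasurable
      (Filter.Eventually.of_forall fun x => by simpa using hC' x)
  have i3 : Integrable (f * gaussianPDFReal 0 1) :=
    (integrable_gaussianPDFReal 0 1).bdd_mul (c := C) hfc.aestronglyMeasurable
      (Filter.Eventually.of_forall fun x => by simpa using hC x)
  have := integral_mul_deriv_eq_deriv_mul_of_integrable (fun x _ => hf x)
    (fun x _ => hasDeriv_pdf x) i1 i2 i3
  have h2 : ∫ x, gaussianPDFReal 0 1 x • (x * f x) =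
      - ∫ x, f x * -(x * gaussianPDFReal 0 1 x) := by
    rw [← integral_neg]; congr 1; ext x; simp; ring
  rw [h2, this, neg_neg]
  congr 1; ext x; simp; ring

lemma pi_update {ι : Type*} [Fintype ι] [DecidableEq ι] (ν : Measure ℝ) [IsProbabilityMeasure ν]
    (k : ι) :
    MeasurePreserving (fun p : (ι → ℝ) × ℝ => Function.update p.1 k p.2)
      ((Measure.pi fun _ : ι => ν).prod ν) (Measure.pi fun _ : ι => ν) := by
  have hm : Measurable (fun p : (ι → ℝ) × ℝ => Function.update p.1 k p.2) := by
    refine measurable_pi_lambda _ fun j => ?_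
    by_cases h : j = k
    · subst h; simpa using measurable_snd
    · simp only [Function.update_of_ne h]; fun_prop
  refine ⟨hm, (Measure.pi_eq fun s hs => ?_).symm⟩
  rw [Measure.map_apply hm (MeasurableSet.univ_pi hs)]
  have : (fun p : (ι → ℝ) × ℝ => Function.update p.1 k p.2) ⁻¹' (Set.univ.pi s) =
      (Set.univ.pi (Function.update s k Set.univ)) ×ˢ s k := by
    ext ⟨z, t⟩
    simp only [Set.mem_preimage, Set.mem_pi, Set.mem_univ, true_imp_iff, Set.mem_prod]
    constructor
    · intro h
      refine ⟨fun j => ?_, by simpa using h k⟩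
      by_cases hj : j = k
      · subst hj; simp
      · simpa [hj] using h j
    · rintro ⟨h1, h2⟩ j
      by_cases hj : j = k
      · subst hj; simpa using h2
      · simpa [hj] using h1 j
  rw [this, Measure.prod_prod, Measure.pi_pi, ← Finset.mul_prod_erase _ _ (Finset.mem_univ k),
    ← Finset.mul_prod_erase (a := k) _ (fun i => ν (s i)) (Finset.mem_univ k), mul_comm]
  simp only [Function.update_self, measure_univ, one_mul]
  congr 1
  refine Finset.prod_congr rfl fun j hj => ?_
  rw [Function.update_of_ne (Finset.ne_of_mem_erase hj)]

lemma integrable_coord {ι : Type*} [Fintype ι] (k : ι) :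
    Integrable (fun z : ι → ℝ => z k) (Measure.pi fun _ : ι => gaussianReal 0 1) := by
  have h1 : Integrable (fun x : ℝ => x) (gaussianReal 0 1) :=
    (memLp_id_gaussianReal (μ := 0) (v := 1) 1).integrable le_rfl
  exact (measurePreserving_eval (fun _ : ι => gaussianReal 0 1) k).integrable_comp_of_integrable h1

lemma stein {ι : Type*} [Fintype ι] [DecidableEq ι] (k : ι) (F F' : (ι → ℝ) → ℝ) (C C' : ℝ)
    (hFc : Continuous F) (hFc' : Continuous F')
    (hF : ∀ z t, HasDerivAt (fun s => F (Function.update z k s)) (F' (Function.update z k t)) t)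
    (hC : ∀ x, |F x| ≤ C) (hC' : ∀ x, |F' x| ≤ C') :
    ∫ z, z k * F z ∂(Measure.pi fun _ : ι => gaussianReal 0 1) =
      ∫ z, F' z ∂(Measure.pi fun _ : ι => gaussianReal 0 1) := by
  have hp := pi_update (gaussianReal 0 1) k
  have i1 : Integrable (fun z : ι → ℝ => z k * F z) (Measure.pi fun _ : ι => gaussianReal 0 1) :=
    (integrable_coord k).mul_bdd (c := C) hFc.aestronglyMeasurable
      (Filter.Eventually.of_forall fun x => by simpa using hC x)
  have i2 : Integrable F' (Measure.pi fun _ : ι => gaussianReal 0 1) :=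
    Integrable.of_bound hFc'.aestronglyMeasurable C'
      (Filter.Eventually.of_forall fun x => by simpa using hC' x)
  have e1 := integral_map hp.measurable.aemeasurable
    (by rw [hp.map_eq]; exact i1.aestronglyMeasurable)
  have e2 := integral_map hp.measurable.aemeasurable
    (by rw [hp.map_eq]; exact i2.aestronglyMeasurable)
  rw [hp.map_eq] at e1 e2
  have e3 := integral_prod _ (hp.integrable_comp_of_integrable i1)
  have e4 := integral_prod _ (hp.integrable_comp_of_integrable i2)
  refine (e1.trans e3).trans (Eq.trans ?_ (e2.trans e4).symm)
  congr 1
  ext z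
  have hcu : Continuous fun t : ℝ => Function.update z k t := by fun_prop
  simpa using stein_one (fun t => F (Function.update z k t)) (fun t => F' (Function.update z k t))
    C C' (hF z) (fun _ => hC _) (fun _ => hC' _) (hFc'.comp hcu).measurable

/-! ### The moment bound -/

/-- reshape -/
def mat (z : Fin d × Fin n → ℝ) : Matrix (Fin d) (Fin n) ℝ := Matrix.of fun a i => z (a, i)

lemma continuous_mat : Continuous (mat : (Fin d × Fin n → ℝ) → _) :=
  continuous_matrix fun a i => by simpa [mat] using continuous_apply (a, i)

noncomputable abbrev gam (d n : ℕ) : Measure (Fin d × Fin n → ℝ) :=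
  Measure.pi fun _ => gaussianReal 0 1

lemma mat_update (z : Fin d × Fin n → ℝ) (a i) (s t : ℝ) :
    mat (Function.update z (a, i) t) =
      mat (Function.update z (a, i) s) + (t - s) • Matrix.single a i 1 := by
  ext b j
  by_cases h : (b, j) = (a, i)
  · obtain ⟨rfl, rfl⟩ := Prod.mk.inj h
    simp [mat]
  · have h' : ¬ (a = b ∧ i = j) := by rintro ⟨rfl, rfl⟩; exact h rfl
    simp [mat, Function.update_of_ne h, single_apply, h']

lemma D_bound {e : ℝ} (he : 0 < e) (Z : Matrix (Fin d) (Fin n) ℝ) (a i) : |D e a i Z| ≤ 1 / e := by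
  have h1 := T_diag_nonneg he Z a
  have h2 := T_diag_le he Z a
  have h3 := G_diag_nonneg he Z i
  have h4 := G_diag_le he Z i
  have h5 := H_sq_le he Z a i
  have h6 : T e Z a a * G e Z i i ≤ 1 / e := by nlinarith
  rw [D, abs_le]
  constructor <;> nlinarith [mul_nonneg h1 h3, sq_nonneg (H e Z a i)]

lemma H_bound {e : ℝ} (he : 0 < e) (Z : Matrix (Fin d) (Fin n) ℝ) (a i) :
    |H e Z a i| ≤ √(1 / e) := Real.abs_le_sqrt (H_sq_le he Z a i)

lemma integrable_K {e : ℝ} (he : 0 < e) (a : Fin d) :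
    Integrable (fun z => K e (mat z) a a) (gam d n) := by
  refine Integrable.of_bound (((continuous_K he).comp continuous_mat).matrix_elem a a
    |>.aestronglyMeasurable) (1 / e) (Filter.Eventually.of_forall fun z => ?_)
  rw [Real.norm_eq_abs, abs_of_nonneg (K_diag_nonneg _ _ _)]
  exact K_diag_le he _ a

lemma trace_bound {e : ℝ} (he : 0 < e) (hd : n + 1 < d) :
    ((d : ℝ) - n - 1) * ∑ a, ∫ z, K e (mat z) a a ∂(gam d n) ≤ n := by
  have hH : ∀ (a : Fin d) (i : Fin n), Continuous fun z => H e (mat z) a i := fun a i =>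
    ((continuous_H he).comp continuous_mat).matrix_elem a i
  have hDc : ∀ (a : Fin d) (i : Fin n), Continuous fun z => D e a i (mat z) := fun a i =>
    (continuous_D he a i).comp continuous_mat
  have hst : ∀ (a : Fin d) (i : Fin n), ∫ z, z (a, i) * H e (mat z) a i ∂(gam d n) =
      ∫ z, D e a i (mat z) ∂(gam d n) := fun a i =>
    stein (a, i) (fun z => H e (mat z) a i) (fun z => D e a i (mat z)) _ _ (hH a i) (hDc a i)
      (fun z t => hasDeriv_H he a i (fun s => mat (Function.update z (a, i) s))
        (fun s t => mat_update z a i s t) t)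
      (fun z => H_bound he _ a i) (fun z => D_bound he _ a i)
  have iD : ∀ (a : Fin d) (i : Fin n), Integrable (fun z => D e a i (mat z)) (gam d n) := fun a i =>
    Integrable.of_bound (hDc a i).aestronglyMeasurable (1 / e)
      (Filter.Eventually.of_forall fun z => D_bound he _ a i)
  have iH : ∀ (a : Fin d) (i : Fin n),
      Integrable (fun z => z (a, i) * H e (mat z) a i) (gam d n) := fun a i =>
    (integrable_coord (a, i)).mul_bdd (c := √(1 / e)) (hH a i).aestronglyMeasurable
      (Filter.Eventually.of_forall fun x => H_bound he _ a i)
  calc ((d : ℝ) - n - 1) * ∑ a, ∫ z, K e (mat z) a a ∂(gam d n)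
      = ∫ z, ((d : ℝ) - n - 1) * (K e (mat z)).trace ∂(gam d n) := by
        rw [integral_const_mul, ← integral_finsetSum _ fun a _ => integrable_K he a]
        rfl
    _ ≤ ∫ z, ∑ a, ∑ i, D e a i (mat z) ∂(gam d n) := by
        refine integral_mono ?_ ?_ fun z => sum_D he hd (mat z)
        · exact (integrable_finsetSum _ fun a _ => integrable_K he a).const_mul _
        · exact integrable_finsetSum _ fun a _ => integrable_finsetSum _ fun i _ => iD a i
    _ = ∫ z, ∑ a, ∑ i, z (a, i) * H e (mat z) a i ∂(gam d n) := by
        rw [integral_finsetSum _ fun a _ => integrable_finsetSum _ fun i _ => iD a i,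
          integral_finsetSum _ fun a _ => integrable_finsetSum _ fun i _ => iH a i]
        refine Finset.sum_congr rfl fun a _ => ?_
        rw [integral_finsetSum _ fun i _ => iD a i, integral_finsetSum _ fun i _ => iH a i]
        exact Finset.sum_congr rfl fun i _ => (hst a i).symm
    _ ≤ ∫ z, (n : ℝ) ∂(gam d n) := by
        refine integral_mono
          (integrable_finsetSum _ fun a _ => integrable_finsetSum _ fun i _ => iH a i)
          (integrable_const _) fun z => ?_
        have h1 := trace_ZH he (mat z)
        have h2 := mul_nonneg he.le (G_trace_nonneg he (mat z))
        have h3 : ∑ a, ∑ i, z (a, i) * H e (mat z) a i = ∑ a, ∑ i, mat z a i * H e (mat z) a i := rfl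
        simp only
        rw [h3, h1]
        linarith
    _ = n := by simp

lemma K_perm (e : ℝ) (Z : Matrix (Fin d) (Fin n) ℝ) (σ : Equiv.Perm (Fin d)) (a : Fin d) :
    K e (Z.submatrix σ id) a a = K e Z (σ a) (σ a) := by
  have hG : G e (Z.submatrix σ id) = G e Z := by
    have : (Z.submatrix σ id)ᵀ * Z.submatrix σ id = Zᵀ * Z := by
      ext i j
      simp only [mul_apply, transpose_apply, submatrix_apply, id]
      exact Equiv.sum_comp σ fun b => Z b i * Z b j
    simp [G, this]
  simp [K, H, hG, mul_apply, transpose_apply, submatrix_apply]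

lemma K_symm {e : ℝ} (he : 0 < e) (a b : Fin d) :
    ∫ z, K e (mat z) a a ∂(gam d n) = ∫ z, K e (mat z) b b ∂(gam d n) := by
  set σ := Equiv.swap a b
  have hp : MeasurePreserving (fun z : Fin d × Fin n → ℝ => fun p : Fin d × Fin n => z (σ p.1, p.2))
      (gam d n) (gam d n) := by
    have hm : Measurable (fun z : Fin d × Fin n → ℝ => fun p : Fin d × Fin n => z (σ p.1, p.2)) := by
      fun_prop
    refine ⟨hm, (Measure.pi_eq fun s hs => ?_).symm⟩
    rw [Measure.map_apply hm (MeasurableSet.univ_pi hs)]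
    have : (fun z : Fin d × Fin n → ℝ => fun p : Fin d × Fin n => z (σ p.1, p.2)) ⁻¹'
        (Set.univ.pi s) = Set.univ.pi fun p => s (σ p.1, p.2) := by
      ext z
      simp only [Set.mem_preimage, Set.mem_pi, Set.mem_univ, true_imp_iff]
      constructor
      · intro h p
        simpa [σ] using h (σ p.1, p.2)
      · intro h p
        simpa [σ] using h (σ p.1, p.2)
    rw [this, Measure.pi_pi]
    exact Equiv.prod_comp (σ.prodCongr (Equiv.refl _)) fun p => (gaussianReal 0 1) (s p)
  have e1 := integral_map (f := fun z => K e (mat z) a a) hp.measurable.aemeasurable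
    (by rw [hp.map_eq]; exact (integrable_K he a).aestronglyMeasurable)
  rw [hp.map_eq] at e1
  rw [e1]
  congr 1
  ext z
  have := K_perm e (mat z) σ a
  rw [Equiv.swap_apply_left] at this
  exact this

lemma moment {e : ℝ} (he : 0 < e) (hd : n + 1 < d) (a : Fin d) :
    ∫ z, K e (mat z) a a ∂(gam d n) ≤ n / (d * ((d : ℝ) - n - 1)) := by
  have h := trace_bound (n := n) he hd
  rw [Finset.sum_congr rfl fun b _ => K_symm he b a] at h
  simp only [Finset.sum_const, Finset.card_univ, Fintype.card_fin, nsmul_eq_mul] at h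
  have hd' : (n : ℝ) + 1 < d := by exact_mod_cast hd
  have hn : (0 : ℝ) ≤ n := Nat.cast_nonneg n
  rw [le_div_iff₀ (mul_pos (by linarith) (by linarith))]
  linarith

/-! ### Whitening -/

lemma whitening {Sig : Matrix (Fin d) (Fin d) ℝ} (hSig : Sig.PosDef) :
    ∃ (A B : Matrix (Fin d) (Fin d) ℝ) (c : Fin d → ℝ), B * A = 1 ∧ A * B = 1 ∧ Sig = A * Aᵀ ∧
      B * Bᵀ = diagonal c ∧ (∀ j, 0 ≤ c j) ∧ (Sig⁻¹).trace = ∑ j, c j := by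
  set lam := hSig.isHermitian.eigenvalues with hlam
  have hpos : ∀ j, 0 < lam j := fun j => hSig.eigenvalues_pos j
  set U : Matrix (Fin d) (Fin d) ℝ := (hSig.isHermitian.eigenvectorUnitary : Matrix (Fin d) (Fin d) ℝ) with hU
  have hUU : Uᵀ * U = 1 := by
    have := Unitary.coe_star_mul_self hSig.isHermitian.eigenvectorUnitary
    simpa [star_eq_conjTranspose, conjTranspose_eq_transpose_of_trivial] using this
  have hUU' : U * Uᵀ = 1 := mul_eq_one_comm.1 hUU
  have hs : Sig = U * diagonal lam * Uᵀ := by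
    have := hSig.isHermitian.spectral_theorem
    rw [Unitary.conjStarAlgAut_apply] at this
    simpa [star_eq_conjTranspose, conjTranspose_eq_transpose_of_trivial, Function.comp_def] using this
  set s : Fin d → ℝ := fun j => √(lam j)
  have hs0 : ∀ j, s j ≠ 0 := fun j => (Real.sqrt_pos.2 (hpos j)).ne'
  have hss : ∀ j, s j * s j = lam j := fun j => Real.mul_self_sqrt (hpos j).le
  have hd1 : diagonal (fun j => (s j)⁻¹) * diagonal s = (1 : Matrix (Fin d) (Fin d) ℝ) := by
    rw [diagonal_mul_diagonal, ← diagonal_one]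
    congr 1; ext j; exact inv_mul_cancel₀ (hs0 j)
  have hBA : (diagonal (fun j => (s j)⁻¹) * Uᵀ) * (U * diagonal s) = 1 := by
    rw [Matrix.mul_assoc, ← Matrix.mul_assoc Uᵀ, hUU, Matrix.one_mul, hd1]
  have hBB : (diagonal (fun j => (s j)⁻¹) * Uᵀ) * (diagonal (fun j => (s j)⁻¹) * Uᵀ)ᵀ =
      diagonal fun j => (s j)⁻¹ * (s j)⁻¹ := by
    rw [transpose_mul, transpose_transpose, diagonal_transpose, Matrix.mul_assoc,
      ← Matrix.mul_assoc Uᵀ, hUU, Matrix.one_mul, diagonal_mul_diagonal]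
  have hAA : Sig = (U * diagonal s) * (U * diagonal s)ᵀ := by
    rw [transpose_mul, diagonal_transpose, Matrix.mul_assoc, ← Matrix.mul_assoc (diagonal s),
      diagonal_mul_diagonal, ← Matrix.mul_assoc]
    simp only [hss]; exact hs
  refine ⟨U * diagonal s, diagonal (fun j => (s j)⁻¹) * Uᵀ, fun j => (s j)⁻¹ * (s j)⁻¹, hBA,
    mul_eq_one_comm.1 hBA, hAA, hBB, fun j => mul_self_nonneg _, ?_⟩
  set A := U * diagonal s
  set B := diagonal (fun j => (s j)⁻¹) * Uᵀ
  have hinv : Sig⁻¹ = Bᵀ * B := by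
    apply inv_eq_right_inv
    have hAB : Aᵀ * Bᵀ = 1 := by rw [← transpose_mul, hBA, transpose_one]
    rw [hAA, Matrix.mul_assoc, ← Matrix.mul_assoc Aᵀ, hAB, Matrix.one_mul, mul_eq_one_comm.1 hBA]
  rw [hinv, trace_mul_comm, hBB, trace_diagonal]

lemma law_eq {Ω : Type*} [MeasurableSpace Ω] (μ : Measure Ω) [IsProbabilityMeasure μ]
    {ι : Type*} [Fintype ι] (Y : Ω → ι → ℝ) (hY : Measurable Y)
    (h : ∀ t : ι → ℝ, μ.map (fun ω => ∑ k, t k * Y ω k) =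
      gaussianReal 0 (Real.toNNReal (∑ k, t k ^ 2))) :
    μ.map Y = Measure.pi fun _ : ι => gaussianReal 0 1 := by
  have : IsProbabilityMeasure (μ.map Y) := Measure.isProbabilityMeasure_map hY.aemeasurable
  have key : (μ.map Y).map (WithLp.toLp 2) =
      (Measure.pi fun _ : ι => gaussianReal 0 1).map (WithLp.toLp 2) := by
    have hm : Measurable (WithLp.toLp 2 : (ι → ℝ) → EuclideanSpace ℝ ι) := by fun_prop
    have := Measure.isProbabilityMeasure_map (μ := μ.map Y) hm.aemeasurable
    rw [map_pi_eq_stdGaussian]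
    apply Measure.ext_of_charFun (E := EuclideanSpace ℝ ι)
    ext t
    rw [charFun_stdGaussian, charFun_apply, Measure.map_map hm hY,
      integral_map (hm.comp hY).aemeasurable (by fun_prop)]
    have h1 := charFun_gaussianReal (μ := 0) (v := Real.toNNReal (∑ k, t k ^ 2)) 1
    have hm2 : Measurable fun ω => ∑ k, t k * Y ω k := by fun_prop
    rw [← h t, charFun_apply_real, integral_map hm2.aemeasurable (by fun_prop)] at h1
    have h2 : (0 : ℝ) ≤ ∑ k, t k ^ 2 := Finset.sum_nonneg fun k _ => sq_nonneg _
    have h3 : ‖t‖ ^ 2 = ∑ k, t k ^ 2 := EuclideanSpace.real_norm_sq_eq t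
    rw [Real.coe_toNNReal _ h2, ← h3] at h1
    convert h1 using 1
    · congr 1
      ext ω
      simp [PiLp.inner_apply]
    · congr 1
      push_cast; ring
  have h5 := congrArg (Measure.map (WithLp.ofLp : EuclideanSpace ℝ ι → ι → ℝ)) key
  have h6 : ∀ ν : Measure (ι → ℝ), (ν.map (WithLp.toLp 2)).map
      (WithLp.ofLp : EuclideanSpace ℝ ι → ι → ℝ) = ν := by
    intro ν
    rw [Measure.map_map (by fun_prop) (by fun_prop)]
    exact Measure.map_id
  rwa [h6, h6] at h5

/-- whitened data -/
def whit (B : Matrix (Fin d) (Fin d) ℝ) (x : Fin n → Fin d → ℝ) : Fin d × Fin n → ℝ :=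
  fun p => (B *ᵥ x p.2) p.1

lemma law_whit {Ω : Type*} [MeasurableSpace Ω] (μ : Measure Ω) [IsProbabilityMeasure μ]
    (Sig A B : Matrix (Fin d) (Fin d) ℝ) (hBA : B * A = 1) (hS : Sig = A * Aᵀ)
    (Xi : Fin n → Ω → (Fin d → ℝ)) (hXmeas : ∀ i, Measurable (Xi i))
    (hgauss : ∀ v : Fin n → (Fin d → ℝ),
      μ.map (fun ω => ∑ i, v i ⬝ᵥ Xi i ω) =
        gaussianReal 0 (Real.toNNReal (∑ i, v i ⬝ᵥ Sig.mulVec (v i)))) :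
    Measurable (fun ω => whit B fun i => Xi i ω) ∧
    μ.map (fun ω => whit B fun i => Xi i ω) = gam d n := by
  have hm : Measurable (fun ω => whit B fun i => Xi i ω) := by
    refine measurable_pi_lambda _ fun p => ?_
    simp only [whit, mulVec, dotProduct]
    have := fun j => (measurable_pi_apply j).comp (hXmeas p.2)
    refine Finset.measurable_sum _ fun j _ => (this j).const_mul _
  refine ⟨hm, law_eq μ _ hm fun t => ?_⟩
  have h := hgauss fun i => Bᵀ *ᵥ fun a => t (a, i)
  have e1 : ∀ ω, ∑ k, t k * whit B (fun i => Xi i ω) k =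
      ∑ i, (Bᵀ *ᵥ fun a => t (a, i)) ⬝ᵥ Xi i ω := by
    intro ω
    rw [Fintype.sum_prod_type, Finset.sum_comm]
    refine Finset.sum_congr rfl fun i _ => ?_
    rw [mulVec_transpose, ← dotProduct_mulVec]
    rfl
  have e2 : ∑ k, t k ^ 2 = ∑ i, (Bᵀ *ᵥ fun a => t (a, i)) ⬝ᵥ Sig *ᵥ (Bᵀ *ᵥ fun a => t (a, i)) := by
    rw [Fintype.sum_prod_type, Finset.sum_comm]
    refine Finset.sum_congr rfl fun i _ => ?_
    have hAB : Aᵀ * Bᵀ = 1 := by rw [← transpose_mul, hBA, transpose_one]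
    rw [mulVec_transpose, ← dotProduct_mulVec, ← mulVec_transpose, mulVec_mulVec, mulVec_mulVec, hS]
    have : B * (A * Aᵀ) * Bᵀ = 1 := by
      rw [Matrix.mul_assoc, Matrix.mul_assoc, hAB, Matrix.mul_one, hBA]
    rw [this, one_mulVec]
    simp [dotProduct, pow_two]
  simp_rw [e1, e2]
  exact h

lemma gram_eq (A B : Matrix (Fin d) (Fin d) ℝ) (hAB : A * B = 1) (x : Fin n → Fin d → ℝ) :
    ∑ i, vecMulVec (x i) (x i) = A * (mat (whit B x) * (mat (whit B x))ᵀ) * Aᵀ := by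
  have h1 : A * mat (whit B x) = Matrix.of fun a i => x i a := by
    have h2 : mat (whit B x) = B * Matrix.of fun a i => x i a := by
      ext a i; simp [mat, whit, mulVec, dotProduct, mul_apply]
    rw [h2, ← Matrix.mul_assoc, hAB, Matrix.one_mul]
  have h3 : A * (mat (whit B x) * (mat (whit B x))ᵀ) * Aᵀ =
      (A * mat (whit B x)) * (A * mat (whit B x))ᵀ := by
    simp [transpose_mul, Matrix.mul_assoc]
  rw [h3, h1]
  ext a b
  simp [Matrix.sum_apply, vecMulVec_apply, mul_apply]

lemma fatou {Ω : Type*} [MeasurableSpace Ω] (μ : Measure Ω) (f C : Ω → ℝ) (g : ℕ → Ω → ℝ) (M : ℝ)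
    (hM : 0 ≤ M) (hf : Integrable f μ) (hg : ∀ k, Integrable (g k) μ) (hg0 : ∀ k ω, 0 ≤ g k ω)
    (hgM : ∀ k, ∫ ω, g k ω ∂μ ≤ M)
    (h : ∀ k ω, f ω ≤ g k ω + 2 * (1 / ((k : ℝ) + 1)) * C ω) :
    ∫ ω, f ω ∂μ ≤ M := by
  have h1 : ∀ ω, ENNReal.ofReal (f ω) ≤
      Filter.liminf (fun k => ENNReal.ofReal (g k ω)) Filter.atTop := by
    intro ω
    have t1 : Filter.Tendsto (fun k : ℕ => f ω - 2 * (1 / ((k : ℝ) + 1)) * C ω) Filter.atTop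
        (nhds (f ω)) := by
      have := ((tendsto_one_div_add_atTop_nhds_zero_nat (𝕜 := ℝ)).const_mul 2).mul_const (C ω)
      simpa using this.const_sub (f ω)
    have t2 := ENNReal.tendsto_ofReal t1
    rw [← t2.liminf_eq]
    exact Filter.liminf_le_liminf (Filter.Eventually.of_forall fun k =>
      ENNReal.ofReal_le_ofReal (by linarith [h k ω]))
  have h2 : ∫⁻ ω, ENNReal.ofReal (f ω) ∂μ ≤ ENNReal.ofReal M := by
    calc ∫⁻ ω, ENNReal.ofReal (f ω) ∂μ
        ≤ ∫⁻ ω, Filter.liminf (fun k => ENNReal.ofReal (g k ω)) Filter.atTop ∂μ := lintegral_mono h1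
      _ ≤ Filter.liminf (fun k => ∫⁻ ω, ENNReal.ofReal (g k ω) ∂μ) Filter.atTop :=
          lintegral_liminf_le' fun k => (hg k).aestronglyMeasurable.aemeasurable.ennreal_ofReal
      _ ≤ Filter.liminf (fun _ : ℕ => ENNReal.ofReal M) Filter.atTop :=
          Filter.liminf_le_liminf (Filter.Eventually.of_forall fun k => by
            rw [← ofReal_integral_eq_lintegral_ofReal (hg k) (ae_of_all _ (hg0 k))]
            exact ENNReal.ofReal_le_ofReal (hgM k))
      _ = ENNReal.ofReal M := Filter.liminf_const _
  rw [integral_eq_lintegral_pos_part_sub_lintegral_neg_part hf]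
  have h3 : (∫⁻ ω, ENNReal.ofReal (f ω) ∂μ).toReal ≤ M := ENNReal.toReal_le_of_le_ofReal hM h2
  have h4 : 0 ≤ (∫⁻ ω, ENNReal.ofReal (-f ω) ∂μ).toReal := ENNReal.toReal_nonneg
  linarith

lemma trace_BKB (B K' : Matrix (Fin d) (Fin d) ℝ) (c : Fin d → ℝ) (hBB : B * Bᵀ = diagonal c) :
    (Bᵀ * K' * B).trace = ∑ j, c j * K' j j := by
  rw [Matrix.mul_assoc, trace_mul_comm, Matrix.mul_assoc, hBB]
  simp [trace, mul_comm]

end WishartAux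

/-- **Expected trace of the pseudoinverse of a singular Wishart matrix.** Let
`W = Σᵢ XᵢXᵢᵀ` where `X₁,…,Xₙ` are i.i.d. `N(0,Σ)` in `ℝᵈ` (characterized by: every joint
linear marginal `Σᵢ vᵢᵀXᵢ` is a centered Gaussian of variance `Σᵢ vᵢᵀΣvᵢ`), with `Σ ≻ 0`
and `d > n + 1`. Then `E[Tr(W†)] ≤ (n/(d(d-n-1))) Tr(Σ⁻¹)`. -/
theorem wishart_pseudoinverse_trace_bound (n d : ℕ) (hd : n + 1 < d)
    {Ω : Type*} [MeasurableSpace Ω] (μ : Measure Ω) [IsProbabilityMeasure μ]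
    (Sig : Matrix (Fin d) (Fin d) ℝ) (hSig : Sig.PosDef)
    (Xi : Fin n → Ω → (Fin d → ℝ)) (hXmeas : ∀ i, Measurable (Xi i))
    (hgauss : ∀ v : Fin n → (Fin d → ℝ),
      μ.map (fun ω => ∑ i, v i ⬝ᵥ Xi i ω) =
        gaussianReal 0 (Real.toNNReal (∑ i, v i ⬝ᵥ Sig.mulVec (v i))))
    (W : Ω → Matrix (Fin d) (Fin d) ℝ)
    (hW : ∀ ω, W ω = ∑ i, vecMulVec (Xi i ω) (Xi i ω))
    (Wdag : Ω → Matrix (Fin d) (Fin d) ℝ)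
    (hWdag : ∀ ω, IsMoorePenrose (W ω) (Wdag ω))
    (hint : Integrable (fun ω => (Wdag ω).trace) μ) :
    (∫ ω, (Wdag ω).trace ∂μ) ≤
      (n : ℝ) / ((d : ℝ) * ((d : ℝ) - (n : ℝ) - 1)) * (Sig⁻¹).trace := by
  classical
  obtain ⟨A, B, c, hBA, hAB, hS, hBB, hc, htr⟩ := WishartAux.whitening hSig
  obtain ⟨hm, hlaw⟩ := WishartAux.law_whit μ Sig A B hBA hS Xi hXmeas hgauss
  have hd' : (n : ℝ) + 1 < d := by exact_mod_cast hd
  have hn : (0 : ℝ) ≤ n := Nat.cast_nonneg n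
  have hep : ∀ k : ℕ, (0 : ℝ) < 1 / ((k : ℝ) + 1) := fun k => by positivity
  have hiK : ∀ (k : ℕ) (j : Fin d), Integrable (fun ω => WishartAux.K (1 / ((k : ℝ) + 1))
      (WishartAux.mat (WishartAux.whit B fun i => Xi i ω)) j j) μ := fun k j => by
    have h1 := WishartAux.integrable_K (n := n) (hep k) j
    rw [← hlaw] at h1
    exact h1.comp_measurable hm
  have hK : ∀ (k : ℕ) (j : Fin d), ∫ ω, WishartAux.K (1 / ((k : ℝ) + 1))
      (WishartAux.mat (WishartAux.whit B fun i => Xi i ω)) j j ∂μ ≤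
        (n : ℝ) / ((d : ℝ) * ((d : ℝ) - (n : ℝ) - 1)) := fun k j => by
    have h1 := WishartAux.integrable_K (n := n) (hep k) j
    have h2 := WishartAux.moment (n := n) (hep k) hd j
    rw [← hlaw] at h1 h2
    rwa [integral_map hm.aemeasurable h1.aestronglyMeasurable] at h2
  rw [htr]
  refine WishartAux.fatou μ _ (fun ω => (Wdag ω * A * (Wdag ω * A)ᵀ).trace)
    (fun k ω => ∑ j, c j * WishartAux.K (1 / ((k : ℝ) + 1))
      (WishartAux.mat (WishartAux.whit B fun i => Xi i ω)) j j) _ ?_ hint ?_ ?_ ?_ ?_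
  · exact mul_nonneg (div_nonneg hn (mul_nonneg (by linarith) (by linarith)))
      (Finset.sum_nonneg fun j _ => hc j)
  · exact fun k => integrable_finsetSum _ fun j _ => (hiK k j).const_mul _
  · exact fun k ω => Finset.sum_nonneg fun j _ =>
      mul_nonneg (hc j) (WishartAux.K_diag_nonneg _ _ _)
  · intro k
    rw [integral_finsetSum _ fun j _ => (hiK k j).const_mul _, Finset.mul_sum]
    refine Finset.sum_le_sum fun j _ => ?_
    rw [integral_const_mul, mul_comm]
    exact mul_le_mul_of_nonneg_right (hK k j) (hc j)
  · intro k ω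
    rw [← WishartAux.trace_BKB B _ c hBB]
    refine WishartAux.pointwise (hep k) _ A B (Wdag ω) hBA ?_
    rw [← WishartAux.gram_eq A B hAB, ← hW ω]
    exact hWdag ω
end

section
/- Let X_1,…,X_n be i.i.d. N(0, Σ) in ℝ^d with Σ positive definite and n < d - 1, and let G ∈ ℝ^{n×n} be the Gram matrix G_{ij} = X_iᵀX_j. Then G is almost surely invertible, E[G⁻¹] = (E[Tr(G⁻¹)]/n) · I_n, and E[Tr(G⁻¹)] ≤ (n / (d(d - n - 1))) · Tr(Σ⁻¹). -/
open Matrix MeasureTheory ProbabilityTheory BigOperators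

/-- standard Gaussian vector law -/
noncomputable def gamV (d : ℕ) : Measure (Fin d → ℝ) := Measure.pi fun _ => gaussianReal 0 1

instance (d : ℕ) : IsProbabilityMeasure (gamV d) := by unfold gamV; infer_instance

/-- standard Gaussian matrix law -/
noncomputable def gamM (n d : ℕ) : Measure (Fin n → Fin d → ℝ) := Measure.pi fun _ => gamV d

instance (n d : ℕ) : IsProbabilityMeasure (gamM n d) := by unfold gamM; infer_instance

lemma gamV_char (d : ℕ) (v : Fin d → ℝ) :
    ∫ y, Complex.exp (((∑ k, v k * y k : ℝ) : ℂ) * Complex.I) ∂(gamV d)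
      = Complex.exp (((-(∑ k, v k ^ 2) / 2 : ℝ) : ℂ)) := by
  have h : ∀ y : Fin d → ℝ, Complex.exp (((∑ k, v k * y k : ℝ) : ℂ) * Complex.I)
      = ∏ k, Complex.exp (((v k * y k : ℝ) : ℂ) * Complex.I) := by
    intro y
    rw [← Complex.exp_sum, ← Finset.sum_mul, Complex.ofReal_sum]
  simp_rw [h]
  unfold gamV
  rw [integral_fintype_prod_eq_prod (fun k (x : ℝ) => Complex.exp (((v k * x : ℝ) : ℂ) * Complex.I))]
  have h2 : ∀ k, ∫ x, Complex.exp (((v k * x : ℝ) : ℂ) * Complex.I) ∂(gaussianReal 0 1)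
      = Complex.exp (((-(v k ^ 2) / 2 : ℝ) : ℂ)) := by
    intro k
    have := charFun_gaussianReal (μ := 0) (v := 1) (v k)
    rw [charFun_apply_real] at this
    push_cast
    rw [this]
    congr 1
    push_cast; ring
  simp_rw [h2]
  rw [← Complex.exp_sum, ← Complex.ofReal_sum]
  congr 2
  rw [← Finset.sum_div, Finset.sum_neg_distrib]

lemma gamM_char (n d : ℕ) (v : Fin n → Fin d → ℝ) :
    ∫ y, Complex.exp (((∑ i, ∑ k, v i k * y i k : ℝ) : ℂ) * Complex.I) ∂(gamM n d)
      = Complex.exp (((-(∑ i, ∑ k, v i k ^ 2) / 2 : ℝ) : ℂ)) := by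
  have h : ∀ y : Fin n → Fin d → ℝ, Complex.exp (((∑ i, ∑ k, v i k * y i k : ℝ) : ℂ) * Complex.I)
      = ∏ i, Complex.exp (((∑ k, v i k * y i k : ℝ) : ℂ) * Complex.I) := by
    intro y
    rw [← Complex.exp_sum, ← Finset.sum_mul, Complex.ofReal_sum]
  simp_rw [h]
  unfold gamM
  rw [integral_fintype_prod_eq_prod
    (fun i (x : Fin d → ℝ) => Complex.exp (((∑ k, v i k * x k : ℝ) : ℂ) * Complex.I))]
  simp_rw [gamV_char]
  rw [← Complex.exp_sum, ← Complex.ofReal_sum]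
  congr 2
  rw [← Finset.sum_div, Finset.sum_neg_distrib]

lemma law_gamV {Ω : Type*} [MeasurableSpace Ω] (μ : Measure Ω) [IsProbabilityMeasure μ] (d : ℕ)
    (Z : Ω → Fin d → ℝ) (hZ : Measurable Z)
    (h : ∀ v : Fin d → ℝ, ∫ ω, Complex.exp (((∑ k, v k * Z ω k : ℝ) : ℂ) * Complex.I) ∂μ
      = Complex.exp (((-(∑ k, v k ^ 2) / 2 : ℝ) : ℂ))) :
    μ.map Z = gamV d := by
  have := Measure.isProbabilityMeasure_map (μ := μ) hZ.aemeasurable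
  apply Measure.ext_of_charFunDual
  ext L
  have hL : ∀ y : Fin d → ℝ, L y = ∑ k, L (Pi.single k 1) * y k := by
    intro y
    conv_lhs => rw [pi_eq_sum_univ' y]
    rw [map_sum]
    refine Finset.sum_congr rfl fun k _ => ?_
    rw [map_smul, smul_eq_mul, mul_comm]
  rw [charFunDual_apply, charFunDual_apply, integral_map hZ.aemeasurable (by fun_prop)]
  obtain ⟨c, hc⟩ : ∃ c : Fin d → ℝ, ∀ y, L y = ∑ k, c k * y k := ⟨_, hL⟩
  simp_rw [hc]
  rw [h, gamV_char]

lemma law_gamM {Ω : Type*} [MeasurableSpace Ω] (μ : Measure Ω) [IsProbabilityMeasure μ] (n d : ℕ)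
    (Z : Ω → Fin n → Fin d → ℝ) (hZ : Measurable Z)
    (h : ∀ v : Fin n → Fin d → ℝ,
      ∫ ω, Complex.exp (((∑ i, ∑ k, v i k * Z ω i k : ℝ) : ℂ) * Complex.I) ∂μ
      = Complex.exp (((-(∑ i, ∑ k, v i k ^ 2) / 2 : ℝ) : ℂ))) :
    μ.map Z = gamM n d := by
  have := Measure.isProbabilityMeasure_map (μ := μ) hZ.aemeasurable
  apply Measure.ext_of_charFunDual
  ext L
  have hL : ∀ y : Fin n → Fin d → ℝ,
      L y = ∑ i, ∑ k, L (Pi.single i (Pi.single k 1)) * y i k := by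
    intro y
    have : y = ∑ i, ∑ k, y i k • (Pi.single i (Pi.single k (1:ℝ)) : Fin n → Fin d → ℝ) := by
      ext a b
      simp only [Finset.sum_apply, Pi.smul_apply]
      rw [Finset.sum_eq_single a, Finset.sum_eq_single b]
      · simp
      · intro k _ hk; simp [hk.symm]
      · simp
      · intro i _ hi; simp [hi.symm]
      · simp
    conv_lhs => rw [this]
    simp_rw [map_sum, map_smul, smul_eq_mul, mul_comm]
  rw [charFunDual_apply, charFunDual_apply, integral_map hZ.aemeasurable (by fun_prop)]
  obtain ⟨c, hc⟩ : ∃ c : Fin n → Fin d → ℝ, ∀ y, L y = ∑ i, ∑ k, c i k * y i k :=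
    ⟨fun i k => L (Pi.single i (Pi.single k 1)), hL⟩
  simp_rw [hc]
  rw [h, gamM_char]

lemma gauss_exp (t : ℝ) (ht : 0 < t) :
    ∫⁻ x, ENNReal.ofReal (Real.exp (-(t * x ^ 2))) ∂(gaussianReal 0 1)
      = ENNReal.ofReal ((1 + 2 * t) ^ (-(1/2) : ℝ)) := by
  rw [← ofReal_integral_eq_lintegral_ofReal]
  · rw [integral_gaussianReal_eq_integral_smul (by simp)]
    congr 1
    have : ∀ x : ℝ, gaussianPDFReal 0 1 x • Real.exp (-(t * x ^ 2))
        = (√(2 * Real.pi))⁻¹ * Real.exp (-(1/2 + t) * x ^ 2) := by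
      intro x
      simp only [gaussianPDFReal, smul_eq_mul]
      rw [mul_assoc, ← Real.exp_add]
      congr 1
      · simp
      · congr 1
        simp
        ring
    simp_rw [this]
    rw [integral_const_mul, integral_gaussian, Real.rpow_neg (by positivity), ← Real.sqrt_eq_rpow,
      ← Real.sqrt_inv, ← Real.sqrt_inv, ← Real.sqrt_mul (by positivity)]
    congr 1
    field_simp
  · refine Integrable.of_bound (by fun_prop) 1 (ae_of_all _ fun x => ?_)
    rw [Real.norm_eq_abs, abs_of_pos (Real.exp_pos _)]
    exact Real.exp_le_one_iff.2 (by nlinarith [sq_nonneg x])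
  · exact ae_of_all _ fun x => (Real.exp_pos _).le

lemma gamV_exp (k : ℕ) (t : ℝ) (ht : 0 < t) :
    ∫⁻ y, ENNReal.ofReal (Real.exp (-(t * ∑ j, y j ^ 2))) ∂(gamV k)
      = ENNReal.ofReal ((1 + 2 * t) ^ (-(k/2) : ℝ)) := by
  have h : ∀ y : Fin k → ℝ, ENNReal.ofReal (Real.exp (-(t * ∑ j, y j ^ 2)))
      = ∏ j, ENNReal.ofReal (Real.exp (-(t * y j ^ 2))) := by
    intro y
    rw [← ENNReal.ofReal_prod_of_nonneg (fun _ _ => (Real.exp_pos _).le), ← Real.exp_sum,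
      Finset.mul_sum, Finset.sum_neg_distrib]
  simp_rw [h]
  have hi : iIndepFun (fun (j : Fin k) (y : Fin k → ℝ) =>
      ENNReal.ofReal (Real.exp (-(t * y j ^ 2)))) (gamV k) := by
    unfold gamV
    exact iIndepFun_pi (X := fun _ (x : ℝ) => ENNReal.ofReal (Real.exp (-(t * x ^ 2))))
      (fun _ => by fun_prop)
  rw [lintegral_prod_eq_prod_lintegral_of_indepFun _ _ hi (fun _ => by fun_prop)]
  have h2 : ∀ j : Fin k, ∫⁻ y, ENNReal.ofReal (Real.exp (-(t * y j ^ 2))) ∂(gamV k)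
      = ENNReal.ofReal ((1 + 2 * t) ^ (-(1/2) : ℝ)) := by
    intro j
    rw [← gauss_exp t ht]
    unfold gamV
    exact (measurePreserving_eval (fun _ : Fin k => gaussianReal 0 1) j).lintegral_comp
      (f := fun x => ENNReal.ofReal (Real.exp (-(t * x ^ 2)))) (by fun_prop)
  simp_rw [h2]
  rw [Finset.prod_const, ← ENNReal.ofReal_pow (by positivity), ← Real.rpow_mul_natCast (by positivity)]
  simp
  congr 2
  ring

lemma inv_le_laplace (s : ℝ) (hs : 0 ≤ s) :
    (ENNReal.ofReal s)⁻¹ = ∫⁻ t in Set.Ioi (0:ℝ), ENNReal.ofReal (Real.exp (-(t * s))) := by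
  rcases hs.eq_or_lt with rfl | hs
  · simp
  · have h1 := integrableOn_exp_mul_Ioi (a := -s) (by linarith) 0
    have h2 := integral_exp_mul_Ioi (a := -s) (by linarith) 0
    rw [← ENNReal.ofReal_inv_of_pos hs]
    have e : ∀ t : ℝ, -(t * s) = -s * t := fun t => by ring
    simp_rw [e]
    rw [← ofReal_integral_eq_lintegral_ofReal h1 (ae_of_all _ fun x => (Real.exp_pos _).le), h2]
    congr 1
    simp

lemma int_pow (k : ℕ) (hk : 3 ≤ k) :
    ∫⁻ t in Set.Ioi (0:ℝ), ENNReal.ofReal ((1 + 2 * t) ^ (-(k/2) : ℝ))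
      = ENNReal.ofReal (1 / (k - 2)) := by
  have hk' : (3:ℝ) ≤ k := by exact_mod_cast hk
  have hd : ∀ x ∈ Set.Ici (0:ℝ), HasDerivAt (fun t : ℝ => - (1 / ((k:ℝ) - 2)) * (1 + 2 * t) ^ (1 -(k/2) : ℝ))
      ((1 + 2 * x) ^ (-(k/2) : ℝ)) x := by
    intro x hx
    have hx : (0:ℝ) ≤ x := hx
    have h1 : HasDerivAt (fun t : ℝ => 1 + 2 * t) 2 x := by
      simpa using ((hasDerivAt_id x).const_mul (2:ℝ)).const_add 1
    have h2 := (h1.rpow_const (p := 1 - (k:ℝ)/2) (Or.inl (by positivity))).const_mul (- (1 / ((k:ℝ) - 2)))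
    refine h2.congr_deriv ?_
    have : (1 - (k:ℝ)/2 - 1) = -(k/2) := by ring
    rw [this]
    have : (k:ℝ) - 2 ≠ 0 := by linarith
    field_simp
    ring
  have hl : Filter.Tendsto (fun t : ℝ => - (1 / ((k:ℝ) - 2)) * (1 + 2 * t) ^ (1 -(k/2) : ℝ)) Filter.atTop (nhds (-(1 / ((k:ℝ) - 2)) * 0)) := by
    apply Filter.Tendsto.const_mul
    have := tendsto_rpow_neg_atTop (y := (k:ℝ)/2 - 1) (by linarith)
    have h3 : Filter.Tendsto (fun t : ℝ => 1 + 2 * t) Filter.atTop Filter.atTop :=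
      Filter.tendsto_atTop_add_const_left _ _ (Filter.tendsto_id.const_mul_atTop (by norm_num))
    have h4 := this.comp h3
    refine h4.congr fun t => ?_
    simp
  have hnn : ∀ x ∈ Set.Ioi (0:ℝ), 0 ≤ (1 + 2 * x) ^ (-(k/2) : ℝ) := by
    intro x hx
    have : (0:ℝ) < x := hx
    positivity
  have h5 := integrableOn_Ioi_deriv_of_nonneg' hd hnn hl
  have h6 := integral_Ioi_of_hasDerivAt_of_nonneg' hd hnn hl
  rw [← ofReal_integral_eq_lintegral_ofReal h5 ((ae_restrict_iff' measurableSet_Ioi).2 (ae_of_all _ hnn)), h6]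
  simp

lemma gamV_inv (k : ℕ) (hk : 3 ≤ k) :
    ∫⁻ y, (ENNReal.ofReal (∑ j, y j ^ 2))⁻¹ ∂(gamV k) = ENNReal.ofReal (1 / (k - 2)) := by
  have h : ∀ y : Fin k → ℝ, (ENNReal.ofReal (∑ j, y j ^ 2))⁻¹
      = ∫⁻ t in Set.Ioi (0:ℝ), ENNReal.ofReal (Real.exp (-(t * ∑ j, y j ^ 2))) := fun y =>
    inv_le_laplace _ (Finset.sum_nonneg fun _ _ => sq_nonneg _)
  simp_rw [h]
  rw [lintegral_lintegral_swap (by fun_prop), ← int_pow k hk]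
  exact setLIntegral_congr_fun measurableSet_Ioi fun t ht => gamV_exp k t ht

lemma gamV_proj (d k : ℕ) (hk : 3 ≤ k) (b : Fin k → Fin d → ℝ)
    (hb : ∀ j l, b j ⬝ᵥ b l = if j = l then 1 else 0) :
    ∫⁻ z, (ENNReal.ofReal (∑ j, (b j ⬝ᵥ z) ^ 2))⁻¹ ∂(gamV d) = ENNReal.ofReal (1 / (k - 2)) := by
  have hm : Measurable (fun z : Fin d → ℝ => fun j => b j ⬝ᵥ z) := by
    unfold dotProduct; fun_prop
  have hlaw := law_gamV (gamV d) k (fun z j => b j ⬝ᵥ z) hm (by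
    intro v
    have e : ∀ z : Fin d → ℝ, ∑ j, v j * (b j ⬝ᵥ z) = ∑ l, (∑ j, v j * b j l) * z l := by
      intro z
      simp_rw [dotProduct, Finset.mul_sum, Finset.sum_mul]
      rw [Finset.sum_comm]
      simp_rw [mul_assoc]
    simp_rw [e]
    rw [gamV_char]
    congr 4
    have : ∀ l, (∑ j, v j * b j l) ^ 2 = ∑ j, ∑ m, v j * v m * (b j l * b m l) := by
      intro l
      rw [sq, Finset.sum_mul_sum]
      refine Finset.sum_congr rfl fun _ _ => Finset.sum_congr rfl fun _ _ => by ring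
    simp_rw [this]
    rw [Finset.sum_comm]
    refine Finset.sum_congr rfl fun j _ => ?_
    rw [Finset.sum_comm]
    simp_rw [← Finset.mul_sum]
    have : ∀ m, ∑ l, b j l * b m l = if j = m then 1 else 0 := fun m => hb j m
    simp_rw [this]
    simp [sq])
  rw [← gamV_inv k hk, ← hlaw, lintegral_map (by fun_prop) hm]

/-- Gram matrix of the rows. -/
def grm {n d : ℕ} (Z : Fin n → Fin d → ℝ) : Matrix (Fin n) (Fin n) ℝ :=
  Matrix.of Z * (Matrix.of Z)ᵀ

/-- Weighted Gram matrix of the rows. -/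
def wgrm {n d : ℕ} (lam : Fin d → ℝ) (Z : Fin n → Fin d → ℝ) : Matrix (Fin n) (Fin n) ℝ :=
  Matrix.of Z * Matrix.diagonal lam * (Matrix.of Z)ᵀ

/-- Dual frame. -/
noncomputable def dfr {n d : ℕ} (Z : Fin n → Fin d → ℝ) : Matrix (Fin n) (Fin d) ℝ :=
  (grm Z)⁻¹ * Matrix.of Z

lemma wgrm_apply {n d : ℕ} (lam : Fin d → ℝ) (Z : Fin n → Fin d → ℝ) (i j : Fin n) :
    wgrm lam Z i j = ∑ k, Z i k * lam k * Z j k := by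
  rw [wgrm, Matrix.mul_apply]
  simp only [Matrix.mul_diagonal, Matrix.transpose_apply, Matrix.of_apply]

lemma grm_eq {n d : ℕ} (Z : Fin n → Fin d → ℝ) : grm Z = wgrm 1 Z := by
  ext i j
  rw [wgrm_apply]
  simp [grm, Matrix.mul_apply]

lemma wgrm_symm {n d : ℕ} (lam : Fin d → ℝ) (Z : Fin n → Fin d → ℝ) :
    (wgrm lam Z)ᵀ = wgrm lam Z := by
  simp [wgrm, Matrix.mul_assoc]

lemma grm_symm {n d : ℕ} (Z : Fin n → Fin d → ℝ) : (grm Z)ᵀ = grm Z := by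
  simp [grm]

lemma dfr_mul {n d : ℕ} (Z : Fin n → Fin d → ℝ) (h : (grm Z).det ≠ 0) :
    dfr Z * (Matrix.of Z)ᵀ = 1 := by
  rw [dfr, Matrix.mul_assoc]
  exact Matrix.nonsing_inv_mul _ (isUnit_iff_ne_zero.2 h)

lemma dfr_mul_self {n d : ℕ} (Z : Fin n → Fin d → ℝ) (h : (grm Z).det ≠ 0) :
    dfr Z * (dfr Z)ᵀ = (grm Z)⁻¹ := by
  have : (dfr Z)ᵀ = (Matrix.of Z)ᵀ * (grm Z)⁻¹ := by
    rw [dfr, Matrix.transpose_mul, Matrix.transpose_nonsing_inv, grm_symm]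
  rw [this, ← Matrix.mul_assoc, dfr_mul Z h, Matrix.one_mul]

lemma bessel {d k : ℕ} (b : Fin k → Fin d → ℝ)
    (hb : ∀ j l, b j ⬝ᵥ b l = if j = l then 1 else 0) (w : Fin d → ℝ) :
    ∑ j, (b j ⬝ᵥ w) ^ 2 ≤ w ⬝ᵥ w := by
  set p : Fin d → ℝ := ∑ j, (b j ⬝ᵥ w) • b j with hp
  have h1 : p ⬝ᵥ w = ∑ j, (b j ⬝ᵥ w) ^ 2 := by
    rw [hp, sum_dotProduct]
    simp [smul_dotProduct, sq]
  have h2 : p ⬝ᵥ p = ∑ j, (b j ⬝ᵥ w) ^ 2 := by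
    have : ∀ j, b j ⬝ᵥ p = b j ⬝ᵥ w := by
      intro j
      rw [hp, dotProduct_sum]
      simp [dotProduct_smul, hb]
    have h4 : p ⬝ᵥ p = (∑ j, (b j ⬝ᵥ w) • b j) ⬝ᵥ p := by rw [← hp]
    rw [h4, sum_dotProduct]
    simp_rw [smul_dotProduct, this, smul_eq_mul, sq]
  have h3 : 0 ≤ (w - p) ⬝ᵥ (w - p) := by
    simpa using dotProduct_self_star_nonneg (w - p)
  rw [sub_dotProduct, dotProduct_sub, dotProduct_sub, dotProduct_comm w p, h1, h2] at h3
  linarith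

lemma inv_bound {n d k : ℕ} (Z : Fin n → Fin d → ℝ) (h : (grm Z).det ≠ 0) (i : Fin n)
    (b : Fin k → Fin d → ℝ)
    (hb : ∀ j l, b j ⬝ᵥ b l = if j = l then 1 else 0)
    (ho : ∀ j l, l ≠ i → b j ⬝ᵥ Z l = 0) :
    (grm Z)⁻¹ i i * ∑ j, (b j ⬝ᵥ Z i) ^ 2 ≤ 1 := by
  have hw : dfr Z i ⬝ᵥ dfr Z i = (grm Z)⁻¹ i i := by
    rw [← dfr_mul_self Z h]; rfl
  have hbw : ∀ j, b j ⬝ᵥ dfr Z i = (grm Z)⁻¹ i i * (b j ⬝ᵥ Z i) := by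
    intro j
    have : dfr Z i = ∑ l, (grm Z)⁻¹ i l • Z l := by
      ext k
      simp [dfr, Matrix.mul_apply, Finset.sum_apply]
    rw [this, dotProduct_sum, Finset.sum_eq_single i]
    · simp [dotProduct_smul]
    · intro l _ hl
      simp [dotProduct_smul, ho j l hl]
    · simp
  have hB := bessel b hb (dfr Z i)
  rw [hw] at hB
  simp_rw [hbw, mul_pow] at hB
  rw [← Finset.mul_sum] at hB
  have ha : 0 ≤ (grm Z)⁻¹ i i := by
    rw [← hw]
    simpa using dotProduct_self_star_nonneg (dfr Z i)
  rcases ha.eq_or_lt with ha | ha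
  · rw [← ha]; simp
  · rw [sq, mul_assoc] at hB
    exact le_of_mul_le_mul_left (by linarith) ha

lemma exists_orth {m d k : ℕ} (y : Fin m → Fin d → ℝ) (h : k + m ≤ d) :
    ∃ b : Fin k → Fin d → ℝ, (∀ j l, b j ⬝ᵥ b l = if j = l then 1 else 0) ∧
      ∀ j l, b j ⬝ᵥ y l = 0 := by
  let y' : Fin m → EuclideanSpace ℝ (Fin d) := fun l => WithLp.toLp 2 (y l)
  let V := Submodule.span ℝ (Set.range y')
  have h1 : Module.finrank ℝ V ≤ m := by
    have := finrank_range_le_card (R := ℝ) y'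
    rwa [Fintype.card_fin] at this
  have h2 := V.finrank_add_finrank_orthogonal
  rw [finrank_euclideanSpace_fin] at h2
  have h3 : k ≤ Module.finrank ℝ Vᗮ := by omega
  let e := stdOrthonormalBasis ℝ Vᗮ
  refine ⟨fun j => (e (Fin.castLE h3 j) : EuclideanSpace ℝ (Fin d)).ofLp, ?_, ?_⟩
  · intro j l
    have := (orthonormal_iff_ite.1 e.orthonormal) (Fin.castLE h3 l) (Fin.castLE h3 j)
    rw [Submodule.coe_inner, EuclideanSpace.inner_eq_star_dotProduct] at this
    simp only [star_trivial] at this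
    rw [this]
    simp [Fin.ext_iff, eq_comm]
  · intro j l
    have hy : y' l ∈ V := Submodule.subset_span ⟨l, rfl⟩
    have := (Submodule.mem_orthogonal V _).1 (e (Fin.castLE h3 j)).2 _ hy
    rw [EuclideanSpace.inner_eq_star_dotProduct] at this
    simpa using this

lemma grm_det_of_li {n d : ℕ} (lam : Fin d → ℝ) (hl : ∀ k, 0 < lam k) (Z : Fin n → Fin d → ℝ)
    (h : LinearIndependent ℝ Z) : (wgrm lam Z).PosDef := by
  have h1 : (Matrix.diagonal lam).PosDef := Matrix.PosDef.diagonal hl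
  have h2 := h1.mul_mul_conjTranspose_same (B := Matrix.of Z)
    (Matrix.vecMul_injective_iff.2 h)
  simpa [wgrm] using h2

lemma li_iff {n d : ℕ} (Z : Fin n → Fin d → ℝ) :
    LinearIndependent ℝ Z ↔ (grm Z).det ≠ 0 := by
  constructor
  · intro h
    rw [grm_eq]
    exact (grm_det_of_li 1 (fun _ => by simp) Z h).det_pos.ne'
  · intro h
    have : Function.Injective (Matrix.of Z).vecMul := by
      intro x y hxy
      have h2 : x ᵥ* grm Z = y ᵥ* grm Z := by
        simp only [grm, ← Matrix.vecMul_vecMul]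
        rw [show x ᵥ* Matrix.of Z = y ᵥ* Matrix.of Z from hxy]
      exact Matrix.vecMul_injective_of_isUnit
        ((Matrix.isUnit_iff_isUnit_det _).2 (isUnit_iff_ne_zero.2 h)) h2
    exact Matrix.vecMul_injective_iff.1 this

lemma gauss_markov {n d : ℕ} (lam : Fin d → ℝ) (hl : ∀ k, 0 < lam k) (Z : Fin n → Fin d → ℝ)
    (h : LinearIndependent ℝ Z) (i : Fin n) :
    (wgrm lam Z)⁻¹ i i ≤ ∑ k, (lam k)⁻¹ * dfr Z i k ^ 2 := by
  have hG : IsUnit (wgrm lam Z).det := (grm_det_of_li lam hl Z h).det_pos.ne'.isUnit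
  have hW := dfr_mul Z ((li_iff Z).1 h)
  set G := wgrm lam Z with hGd
  set M := Matrix.of Z with hM
  set D := Matrix.diagonal lam with hD
  set E := Matrix.diagonal (fun k => (lam k)⁻¹) with hE
  have hDE : D * E = 1 := by
    rw [hD, hE, Matrix.diagonal_mul_diagonal, ← Matrix.diagonal_one]
    congr 1
    ext k
    exact mul_inv_cancel₀ (hl k).ne'
  have hGs : (G⁻¹)ᵀ = G⁻¹ := by
    rw [Matrix.transpose_nonsing_inv, hGd, wgrm_symm]
  set W := dfr Z
  set V := G⁻¹ * M * D with hV
  have hVM : V * Mᵀ = 1 := by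
    rw [hV, Matrix.mul_assoc, Matrix.mul_assoc, ← Matrix.mul_assoc M]
    exact Matrix.nonsing_inv_mul _ hG
  have hET : Eᵀ = E := by simp [hE]
  have hVE : V * E = G⁻¹ * M := by
    rw [hV, Matrix.mul_assoc, hDE, Matrix.mul_one]
  clear_value V
  have hEV : E * Vᵀ = Mᵀ * G⁻¹ := by
    have := congrArg Matrix.transpose hVE
    rwa [Matrix.transpose_mul, Matrix.transpose_mul, hET, hGs] at this
  have e1 : V * E * Vᵀ = G⁻¹ := by
    rw [Matrix.mul_assoc, hEV, ← Matrix.mul_assoc, hVM, Matrix.one_mul]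
  have e2 : W * E * Vᵀ = G⁻¹ := by
    rw [Matrix.mul_assoc, hEV, ← Matrix.mul_assoc, hW, Matrix.one_mul]
  have e3 : V * E * Wᵀ = G⁻¹ := by
    have := congrArg Matrix.transpose e2
    rwa [Matrix.transpose_mul, Matrix.transpose_mul, hET, hGs, Matrix.transpose_transpose,
      ← Matrix.mul_assoc] at this
  have e4 : W * E * Wᵀ = G⁻¹ + (W - V) * E * (W - V)ᵀ := by
    rw [Matrix.transpose_sub, Matrix.sub_mul, Matrix.mul_sub, Matrix.sub_mul, Matrix.sub_mul,
      e1, e2, e3]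
    abel
  have key : ∀ B : Matrix (Fin n) (Fin d) ℝ, (B * E * Bᵀ) i i = ∑ k, (lam k)⁻¹ * B i k ^ 2 := by
    intro B
    rw [Matrix.mul_apply]
    refine Finset.sum_congr rfl fun k _ => ?_
    rw [hE, Matrix.mul_diagonal, Matrix.transpose_apply]
    ring
  rw [← key, e4, Matrix.add_apply, key]
  have : 0 ≤ ∑ k, (lam k)⁻¹ * (W - V) i k ^ 2 :=
    Finset.sum_nonneg fun k _ => mul_nonneg (inv_nonneg.2 (hl k).le) (sq_nonneg _)
  linarith

lemma meas_det {α : Type*} [MeasurableSpace α] {n : ℕ} (A : α → Matrix (Fin n) (Fin n) ℝ)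
    (hA : ∀ i j, Measurable fun a => A a i j) : Measurable fun a => (A a).det := by
  simp_rw [Matrix.det_apply]
  refine Finset.measurable_sum _ fun σ _ => Measurable.const_smul ?_ _
  exact Finset.measurable_prod _ fun i _ => hA _ _

lemma meas_inv {α : Type*} [MeasurableSpace α] {n : ℕ} (A : α → Matrix (Fin n) (Fin n) ℝ)
    (hA : ∀ i j, Measurable fun a => A a i j) (i j : Fin n) :
    Measurable fun a => (A a)⁻¹ i j := by
  simp_rw [Matrix.inv_def, Ring.inverse_eq_inv, Matrix.smul_apply, smul_eq_mul,
    Matrix.adjugate_apply]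
  refine (meas_det A hA).inv.mul (meas_det _ fun k l => ?_)
  simp_rw [Matrix.updateRow_apply]
  split_ifs
  · exact measurable_const
  · exact hA k l

lemma meas_wgrm {n d : ℕ} (lam : Fin d → ℝ) (i j : Fin n) :
    Measurable fun Z : Fin n → Fin d → ℝ => wgrm lam Z i j := by
  simp_rw [wgrm_apply]
  fun_prop

lemma meas_grm {n d : ℕ} (i j : Fin n) :
    Measurable fun Z : Fin n → Fin d → ℝ => grm Z i j := by
  simp_rw [grm_eq]
  exact meas_wgrm _ i j

lemma meas_dfr {n d : ℕ} (i : Fin n) (k : Fin d) :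
    Measurable fun Z : Fin n → Fin d → ℝ => dfr Z i k := by
  simp_rw [dfr, Matrix.mul_apply, Matrix.of_apply]
  refine Finset.measurable_sum _ fun l _ => ?_
  exact (meas_inv grm meas_grm i l).mul (by fun_prop)

lemma ae_li (d : ℕ) : ∀ n : ℕ, n + 1 < d → ∀ᵐ Z ∂(gamM n d), LinearIndependent ℝ Z := by
  intro n
  induction n with
  | zero =>
    intro _
    exact ae_of_all _ fun Z => linearIndependent_empty_type
  | succ m ih =>
    intro hd
    have ih := ih (by omega)
    have hms : MeasurableSet {Z : Fin (m+1) → Fin d → ℝ | LinearIndependent ℝ Z} := by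
      simp_rw [li_iff]
      exact (meas_det grm meas_grm) (measurableSet_singleton 0).compl
    have hmp := measurePreserving_piFinSuccAbove (fun _ : Fin (m+1) => gamV d) 0
    have h1 : ∀ᵐ p ∂((gamV d).prod (gamM m d)),
        LinearIndependent ℝ ((MeasurableEquiv.piFinSuccAbove (fun _ => Fin d → ℝ) 0).symm p) := by
      rw [← Measure.prod_swap]
      have hS : MeasurableSet {p : (Fin d → ℝ) × (Fin m → Fin d → ℝ) | LinearIndependent ℝ
          ((MeasurableEquiv.piFinSuccAbove (fun _ : Fin (m+1) => Fin d → ℝ) 0).symm p)} :=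
        (MeasurableEquiv.measurable _) hms
      refine (ae_map_iff measurable_swap.aemeasurable hS).2 ?_
      refine (Measure.ae_prod_iff_ae_ae (measurable_swap hS)).2 ?_
      filter_upwards [ih] with y hy
      obtain ⟨b, hb, ho⟩ := exists_orth (k := 3) y (by omega)
      have hI := gamV_proj d 3 le_rfl b hb
      have hfin : ∫⁻ z, (ENNReal.ofReal (∑ j, (b j ⬝ᵥ z) ^ 2))⁻¹ ∂(gamV d) ≠ ⊤ := by
        rw [hI]; exact ENNReal.ofReal_ne_top
      have := ae_lt_top (by unfold dotProduct; fun_prop) hfin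
      filter_upwards [this] with z hz
      have : (MeasurableEquiv.piFinSuccAbove (fun _ : Fin (m+1) => Fin d → ℝ) 0).symm (y, z).swap
          = (Fin.cons z y : Fin (m+1) → Fin d → ℝ) := by
        simp [MeasurableEquiv.piFinSuccAbove, Fin.insertNthEquiv]
      rw [this, linearIndependent_finCons]
      refine ⟨hy, fun hmem => ?_⟩
      have h0 : ∀ j, b j ⬝ᵥ z = 0 := by
        intro j
        clear hz this
        induction hmem using Submodule.span_induction with
        | mem x hx => obtain ⟨l, rfl⟩ := hx; exact ho j l
        | zero => simp
        | add x y _ _ hx hy => rw [dotProduct_add, hx, hy, add_zero]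
        | smul a x _ hx => rw [dotProduct_smul, hx, smul_zero]
      simp [h0] at hz
    have h2 := hmp.quasiMeasurePreserving.ae h1
    unfold gamM
    filter_upwards [h2] with x hx
    rwa [MeasurableEquiv.symm_apply_apply] at hx

lemma inv_int (d n : ℕ) (hd : n + 1 < d) (i : Fin n) :
    ∫⁻ Z, ENNReal.ofReal ((grm Z)⁻¹ i i) ∂(gamM n d)
      ≤ ENNReal.ofReal (1 / ((d:ℝ) - n - 1)) := by
  obtain ⟨m, rfl⟩ : ∃ m, n = m + 1 := ⟨n - 1, by have := i.2; omega⟩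
  have hmp := (measurePreserving_piFinSuccAbove (fun _ : Fin (m+1) => gamV d) i).symm
  have hf : Measurable fun Z : Fin (m+1) → Fin d → ℝ => ENNReal.ofReal ((grm Z)⁻¹ i i) :=
    (meas_inv grm meas_grm i i).ennreal_ofReal
  have e1 := hmp.lintegral_comp hf
  unfold gamM
  rw [← e1]
  refine (lintegral_prod_symm _ (hf.comp (MeasurableEquiv.measurable _)).aemeasurable).trans_le ?_
  have hin : ∀ y : Fin m → Fin d → ℝ, ∫⁻ z, ENNReal.ofReal ((grm
      ((MeasurableEquiv.piFinSuccAbove (fun _ : Fin (m+1) => Fin d → ℝ) i).symm (z, y)))⁻¹ i i)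
        ∂(gamV d) ≤ ENNReal.ofReal (1 / ((d:ℝ) - (m + 1 : ℕ) - 1)) := by
    intro y
    obtain ⟨b, hb, ho⟩ := exists_orth (k := d - m) y (by omega)
    have hI := gamV_proj d (d - m) (by omega) b hb
    have : (1 / ((d:ℝ) - (m + 1 : ℕ) - 1)) = 1 / (((d - m : ℕ) : ℝ) - 2) := by
      rw [Nat.cast_sub (by omega)]
      push_cast
      congr 1
      ring
    rw [this, ← hI]
    refine lintegral_mono fun z => ?_
    have e : (MeasurableEquiv.piFinSuccAbove (fun _ : Fin (m+1) => Fin d → ℝ) i).symm (z, y)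
          = (i.insertNth z y : Fin (m+1) → Fin d → ℝ) := by
        simp [MeasurableEquiv.piFinSuccAbove, Fin.insertNthEquiv]
    simp only [e]
    set Z := (i.insertNth z y : Fin (m+1) → Fin d → ℝ) with hZ
    by_cases hdet : (grm Z).det = 0
    · rw [Matrix.nonsing_inv_apply_not_isUnit _ (by simp [hdet])]
      simp
    · have hb2 := inv_bound Z hdet i b hb (by
        intro j l hl
        obtain ⟨l', rfl⟩ := Fin.exists_succAbove_eq hl
        rw [hZ, Fin.insertNth_apply_succAbove]
        exact ho j l')
      have hZi : Z i = z := by rw [hZ, Fin.insertNth_apply_same]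
      rw [hZi] at hb2
      rw [ENNReal.le_inv_iff_mul_le, ← ENNReal.ofReal_mul' (Finset.sum_nonneg fun _ _ => sq_nonneg _)]
      exact ENNReal.ofReal_le_one.2 hb2
  calc _ ≤ ∫⁻ y, ENNReal.ofReal (1 / ((d:ℝ) - (m + 1 : ℕ) - 1)) ∂(Measure.pi fun _ : Fin m => gamV d) :=
        lintegral_mono hin
    _ = _ := by simp

lemma gamM_col (n d : ℕ) (σ : Equiv.Perm (Fin d)) :
    (gamM n d).map (fun Z i k => Z i (σ k)) = gamM n d := by
  refine law_gamM _ n d _ (by fun_prop) fun v => ?_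
  have e : ∀ Z : Fin n → Fin d → ℝ, ∑ i, ∑ k, v i k * Z i (σ k)
      = ∑ i, ∑ k, v i (σ.symm k) * Z i k := by
    intro Z
    refine Finset.sum_congr rfl fun i _ => ?_
    rw [← Equiv.sum_comp σ (fun k => v i (σ.symm k) * Z i k)]
    simp
  simp_rw [e]
  rw [gamM_char n d fun i k => v i (σ.symm k)]
  congr 4
  refine Finset.sum_congr rfl fun i _ => ?_
  exact Equiv.sum_comp σ.symm (fun k => v i k ^ 2)

lemma dfr_int_eq (n d : ℕ) (i : Fin n) (k l : Fin d) :
    ∫⁻ Z, ENNReal.ofReal (dfr Z i k ^ 2) ∂(gamM n d)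
      = ∫⁻ Z, ENNReal.ofReal (dfr Z i l ^ 2) ∂(gamM n d) := by
  conv_rhs => rw [← gamM_col n d (Equiv.swap k l)]
  rw [lintegral_map ((meas_dfr i l).pow_const 2).ennreal_ofReal (by fun_prop)]
  refine lintegral_congr fun Z => ?_
  have h1 : grm (fun i k' => Z i (Equiv.swap k l k')) = grm Z := by
    ext a b
    simp only [grm, Matrix.mul_apply, Matrix.of_apply, Matrix.transpose_apply]
    exact Equiv.sum_comp (Equiv.swap k l) (fun k => Z a k * Z b k)
  simp [dfr, h1, Matrix.mul_apply]

lemma dfr_int_le (n d : ℕ) (hd : n + 1 < d) (i : Fin n) (k : Fin d) :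
    ∫⁻ Z, ENNReal.ofReal (dfr Z i k ^ 2) ∂(gamM n d)
      ≤ ENNReal.ofReal (1 / ((d:ℝ) * ((d:ℝ) - n - 1))) := by
  have hd' : (n:ℝ) + 1 < d := by exact_mod_cast hd
  have h1 : (d : ENNReal) * ∫⁻ Z, ENNReal.ofReal (dfr Z i k ^ 2) ∂(gamM n d)
      ≤ ENNReal.ofReal (1 / ((d:ℝ) - n - 1)) := by
    refine le_trans (le_of_eq ?_) (inv_int d n hd i)
    have : ∑ l : Fin d, ∫⁻ Z, ENNReal.ofReal (dfr Z i l ^ 2) ∂(gamM n d)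
        = (d : ENNReal) * ∫⁻ Z, ENNReal.ofReal (dfr Z i k ^ 2) ∂(gamM n d) := by
      rw [Finset.sum_congr rfl fun l _ => dfr_int_eq n d i l k]
      simp
    rw [← this, ← lintegral_finsetSum _ fun l _ => ((meas_dfr i l).pow_const 2).ennreal_ofReal]
    refine lintegral_congr_ae ?_
    filter_upwards [ae_li d n hd] with Z hZ
    rw [← ENNReal.ofReal_sum_of_nonneg fun _ _ => sq_nonneg _,
      ← dfr_mul_self Z ((li_iff Z).1 hZ), Matrix.mul_apply]
    simp [sq]
  have h2 : (d : ENNReal) = ENNReal.ofReal d := by simp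
  have hd0 : (0:ℝ) < d := by have : (0:ℝ) ≤ n := n.cast_nonneg; linarith
  have h3 : (1 / ((d:ℝ) * ((d:ℝ) - n - 1))) = (1 / ((d:ℝ) - n - 1)) / d := by
    field_simp
  rw [h3, ENNReal.ofReal_div_of_pos hd0, ENNReal.le_div_iff_mul_le (Or.inl (by simpa using hd0.ne')) (Or.inl ENNReal.ofReal_ne_top),
    mul_comm, ← h2]
  exact h1

lemma wgrm_int (n d : ℕ) (hd : n + 1 < d) (lam : Fin d → ℝ) (hl : ∀ k, 0 < lam k) (i : Fin n) :
    ∫⁻ Z, ENNReal.ofReal ((wgrm lam Z)⁻¹ i i) ∂(gamM n d)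
      ≤ ENNReal.ofReal (1 / ((d:ℝ) * ((d:ℝ) - n - 1)) * ∑ k, (lam k)⁻¹) := by
  have hd' : (n:ℝ) + 1 < d := by exact_mod_cast hd
  have hd0 : (0:ℝ) < d := by have : (0:ℝ) ≤ n := n.cast_nonneg; linarith
  have hd1 : 0 < (d:ℝ) - n - 1 := by linarith
  calc _ ≤ ∫⁻ Z, ∑ k, ENNReal.ofReal (lam k)⁻¹ * ENNReal.ofReal (dfr Z i k ^ 2) ∂(gamM n d) := by
        refine lintegral_mono_ae ?_
        filter_upwards [ae_li d n hd] with Z hZ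
        refine (ENNReal.ofReal_le_ofReal (gauss_markov lam hl Z hZ i)).trans (le_of_eq ?_)
        rw [ENNReal.ofReal_sum_of_nonneg fun k _ =>
          mul_nonneg (inv_nonneg.2 (hl k).le) (sq_nonneg _)]
        exact Finset.sum_congr rfl fun k _ => ENNReal.ofReal_mul (inv_nonneg.2 (hl k).le)
    _ = ∑ k, ENNReal.ofReal (lam k)⁻¹ * ∫⁻ Z, ENNReal.ofReal (dfr Z i k ^ 2) ∂(gamM n d) := by
        rw [lintegral_finsetSum _ fun k _ =>
          (((meas_dfr i k).pow_const 2).ennreal_ofReal).const_mul _]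
        exact Finset.sum_congr rfl fun k _ =>
          lintegral_const_mul _ ((meas_dfr i k).pow_const 2).ennreal_ofReal
    _ ≤ ∑ k, ENNReal.ofReal (lam k)⁻¹ * ENNReal.ofReal (1 / ((d:ℝ) * ((d:ℝ) - n - 1))) := by
        gcongr with k
        exact dfr_int_le n d hd i k
    _ = _ := by
        rw [← Finset.sum_mul, ← ENNReal.ofReal_sum_of_nonneg fun k _ => inv_nonneg.2 (hl k).le,
          ← ENNReal.ofReal_mul (Finset.sum_nonneg fun k _ => inv_nonneg.2 (hl k).le), mul_comm]

lemma spectral_real {d : ℕ} (Sig : Matrix (Fin d) (Fin d) ℝ) (hSig : Sig.PosDef) :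
    ∃ (U : Matrix (Fin d) (Fin d) ℝ) (lam : Fin d → ℝ), (∀ k, 0 < lam k) ∧ U * Uᵀ = 1 ∧
      Uᵀ * U = 1 ∧ Sig = U * Matrix.diagonal lam * Uᵀ := by
  have hH := hSig.isHermitian
  have hs := hH.spectral_theorem
  refine ⟨hH.eigenvectorUnitary, hH.eigenvalues, hSig.eigenvalues_pos, ?_, ?_, ?_⟩
  · have := Unitary.coe_mul_star_self hH.eigenvectorUnitary
    simpa [Matrix.star_eq_conjTranspose] using this
  · have := Unitary.coe_star_mul_self hH.eigenvectorUnitary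
    simpa [Matrix.star_eq_conjTranspose] using this
  · conv_lhs => rw [hs]
    simp [Unitary.conjStarAlgAut_apply, Matrix.star_eq_conjTranspose]

lemma gamM_row (n d : ℕ) (ε : Fin n → ℝ) (hε : ∀ i, ε i ^ 2 = 1) (σ : Equiv.Perm (Fin n)) :
    (gamM n d).map (fun Z i k => ε i * Z (σ i) k) = gamM n d := by
  refine law_gamM _ n d _ (by fun_prop) fun v => ?_
  have e : ∀ Z : Fin n → Fin d → ℝ, ∑ i, ∑ k, v i k * (ε i * Z (σ i) k)
      = ∑ i, ∑ k, (ε (σ.symm i) * v (σ.symm i) k) * Z i k := by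
    intro Z
    rw [← Equiv.sum_comp σ (fun i => ∑ k, (ε (σ.symm i) * v (σ.symm i) k) * Z i k)]
    refine Finset.sum_congr rfl fun i _ => Finset.sum_congr rfl fun k _ => ?_
    rw [Equiv.symm_apply_apply]
    ring
  simp_rw [e]
  rw [gamM_char n d fun i k => ε (σ.symm i) * v (σ.symm i) k]
  congr 4
  simp_rw [mul_pow, hε, one_mul]
  exact Equiv.sum_comp σ.symm (fun i => ∑ k, v i k ^ 2)

lemma wgrm_inv_symm (n d : ℕ) (lam : Fin d → ℝ) (ε : Fin n → ℝ) (hε : ∀ i, ε i ^ 2 = 1)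
    (σ : Equiv.Perm (Fin n)) (i j : Fin n) :
    ∫ Y, (wgrm lam Y)⁻¹ i j ∂(gamM n d)
      = ε i * ε j * ∫ Y, (wgrm lam Y)⁻¹ (σ i) (σ j) ∂(gamM n d) := by
  conv_lhs => rw [← gamM_row n d ε hε σ]
  rw [integral_map (Measurable.aemeasurable (by fun_prop))
    (meas_inv (wgrm lam) (meas_wgrm lam) i j).aestronglyMeasurable, ← integral_const_mul]
  refine integral_congr_ae (ae_of_all _ fun Z => ?_)
  have h1 : wgrm lam (fun i k => ε i * Z (σ i) k)
      = Matrix.diagonal ε * (wgrm lam Z).submatrix σ σ * Matrix.diagonal ε := by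
    ext a b
    rw [Matrix.mul_diagonal, Matrix.diagonal_mul, Matrix.submatrix_apply, wgrm_apply, wgrm_apply,
      Finset.mul_sum, Finset.sum_mul]
    refine Finset.sum_congr rfl fun k _ => by ring
  have h2 : (Matrix.diagonal ε)⁻¹ = Matrix.diagonal ε := by
    refine Matrix.inv_eq_right_inv ?_
    rw [Matrix.diagonal_mul_diagonal, ← Matrix.diagonal_one]
    congr 1
    ext k
    rw [← sq]; exact hε k
  simp only [h1]
  rw [Matrix.mul_inv_rev, Matrix.mul_inv_rev, h2, Matrix.inv_submatrix_equiv, Matrix.diagonal_mul,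
    Matrix.mul_diagonal, Matrix.submatrix_apply]
  ring

/-- **Inverse of a Gaussian Gram matrix.** Let `X₁,…,Xₙ` be i.i.d. `N(0,Σ)` in `ℝᵈ`
(characterized by joint linear marginals) with `Σ ≻ 0` and `n < d - 1`, and let
`G ∈ ℝ^{n×n}` be the Gram matrix `G_{ij} = XᵢᵀXⱼ`. Then `G` is almost surely invertible,
`E[G⁻¹] = (E[Tr(G⁻¹)]/n) · Iₙ`, and `E[Tr(G⁻¹)] ≤ (n/(d(d-n-1))) Tr(Σ⁻¹)`. -/
theorem gaussian_gram_inverse (n d : ℕ) (hn : 0 < n) (hd : n + 1 < d)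
    {Ω : Type*} [MeasurableSpace Ω] (μ : Measure Ω) [IsProbabilityMeasure μ]
    (Sig : Matrix (Fin d) (Fin d) ℝ) (hSig : Sig.PosDef)
    (Xi : Fin n → Ω → (Fin d → ℝ)) (hXmeas : ∀ i, Measurable (Xi i))
    (hgauss : ∀ v : Fin n → (Fin d → ℝ),
      μ.map (fun ω => ∑ i, v i ⬝ᵥ Xi i ω) =
        gaussianReal 0 (Real.toNNReal (∑ i, v i ⬝ᵥ Sig.mulVec (v i))))
    (G : Ω → Matrix (Fin n) (Fin n) ℝ)
    (hG : ∀ ω, G ω = Matrix.of fun i j => Xi i ω ⬝ᵥ Xi j ω)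
    (hGinvInt : ∀ i j, Integrable (fun ω => (G ω)⁻¹ i j) μ)
    (hTrInt : Integrable (fun ω => ((G ω)⁻¹).trace) μ) :
    (∀ᵐ ω ∂μ, IsUnit (G ω).det) ∧
      (Matrix.of fun i j => ∫ ω, (G ω)⁻¹ i j ∂μ) =
        ((∫ ω, ((G ω)⁻¹).trace ∂μ) / n) • (1 : Matrix (Fin n) (Fin n) ℝ) ∧
      (∫ ω, ((G ω)⁻¹).trace ∂μ) ≤
        (n : ℝ) / ((d : ℝ) * ((d : ℝ) - (n : ℝ) - 1)) * (Sig⁻¹).trace := by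
  obtain ⟨U, lam, hl, hU1, hU2, hS⟩ := spectral_real Sig hSig
  set Z : Ω → Fin n → Fin d → ℝ := fun ω i k => (√(lam k))⁻¹ * ((Uᵀ *ᵥ Xi i ω) k) with hZdef
  have hZm : Measurable Z := by
    refine measurable_pi_lambda _ fun i => measurable_pi_lambda _ fun k => ?_
    simp only [hZdef, Matrix.mulVec, dotProduct]
    have := hXmeas i
    fun_prop
  have hsq : ∀ k, (√(lam k))⁻¹ * lam k * (√(lam k))⁻¹ = 1 := by
    intro k
    have h1 := Real.mul_self_sqrt (hl k).le
    have h2 := Real.sqrt_pos.2 (hl k)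
    field_simp
    rw [sq, h1]
  have hGZ : ∀ ω, G ω = wgrm lam (Z ω) := by
    intro ω
    ext i j
    rw [hG, wgrm_apply, Matrix.of_apply]
    have e1 : ∀ k, Z ω i k * lam k * Z ω j k = (Uᵀ *ᵥ Xi i ω) k * (Uᵀ *ᵥ Xi j ω) k := by
      intro k
      calc _ = ((√(lam k))⁻¹ * lam k * (√(lam k))⁻¹) * ((Uᵀ *ᵥ Xi i ω) k * (Uᵀ *ᵥ Xi j ω) k) := by
            simp only [hZdef]; ring
        _ = _ := by rw [hsq, one_mul]
    simp_rw [e1]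
    change _ = (Uᵀ *ᵥ Xi i ω) ⬝ᵥ (Uᵀ *ᵥ Xi j ω)
    rw [Matrix.dotProduct_mulVec, Matrix.vecMul_transpose, Matrix.mulVec_mulVec, hU1,
      Matrix.one_mulVec]
  have hlaw : μ.map Z = gamM n d := by
    refine law_gamM μ n d Z hZm fun v => ?_
    set w : Fin n → Fin d → ℝ := fun i => U *ᵥ (fun k => v i k * (√(lam k))⁻¹) with hw
    have hm : Measurable fun ω => ∑ i, w i ⬝ᵥ Xi i ω := by
      unfold dotProduct
      refine Finset.measurable_sum _ fun i _ => Finset.measurable_sum _ fun k _ => ?_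
      have := hXmeas i
      fun_prop
    have e1 : ∀ ω, ∑ i, ∑ k, v i k * Z ω i k = ∑ i, w i ⬝ᵥ Xi i ω := by
      intro ω
      refine Finset.sum_congr rfl fun i _ => ?_
      have : w i ⬝ᵥ Xi i ω = (fun k => v i k * (√(lam k))⁻¹) ⬝ᵥ (Uᵀ *ᵥ Xi i ω) := by
        rw [hw, Matrix.dotProduct_mulVec, Matrix.vecMul_transpose]
      rw [this, dotProduct]
      refine Finset.sum_congr rfl fun k _ => ?_
      simp only [hZdef]; ring
    have e2 : ∀ i, w i ⬝ᵥ Sig.mulVec (w i) = ∑ k, v i k ^ 2 := by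
      intro i
      have hd1 : Sig *ᵥ (w i) = U *ᵥ (Matrix.diagonal lam *ᵥ (fun k => v i k * (√(lam k))⁻¹)) := by
        rw [hS, hw]
        simp only [Matrix.mulVec_mulVec]
        rw [Matrix.mul_assoc, hU2, Matrix.mul_one]
      rw [hd1, Matrix.dotProduct_mulVec]
      have hd2 : w i ᵥ* U = (fun k => v i k * (√(lam k))⁻¹) := by
        rw [hw, ← Matrix.mulVec_transpose, Matrix.mulVec_mulVec, hU2, Matrix.one_mulVec]
      rw [hd2, dotProduct]
      refine Finset.sum_congr rfl fun k _ => ?_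
      rw [Matrix.mulVec_diagonal]
      calc _ = ((√(lam k))⁻¹ * lam k * (√(lam k))⁻¹) * v i k ^ 2 := by ring
        _ = _ := by rw [hsq, one_mul]
    simp_rw [e1]
    have e3 := charFun_apply_real (μ := μ.map fun ω => ∑ i, w i ⬝ᵥ Xi i ω) 1
    rw [integral_map hm.aemeasurable (by fun_prop), hgauss w, charFun_gaussianReal] at e3
    simp_rw [e2] at e3
    rw [Real.coe_toNNReal _ (Finset.sum_nonneg fun i _ => Finset.sum_nonneg fun k _ => sq_nonneg _)]
      at e3
    simp only [Complex.ofReal_one, one_mul] at e3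
    rw [← e3]
    congr 1
    push_cast
    ring
  have hli : ∀ᵐ ω ∂μ, LinearIndependent ℝ (Z ω) := by
    have := ae_li d n hd
    rw [← hlaw] at this
    exact ae_of_ae_map hZm.aemeasurable this
  have hpos : ∀ᵐ ω ∂μ, (G ω).PosDef := by
    filter_upwards [hli] with ω hω
    rw [hGZ]
    exact grm_det_of_li lam hl _ hω
  have htr : ∫ ω, ((G ω)⁻¹).trace ∂μ = ∑ i, ∫ ω, (G ω)⁻¹ i i ∂μ := by
    simp only [Matrix.trace, Matrix.diag_apply]
    exact integral_finsetSum _ fun i _ => hGinvInt i i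
  have hIntEq : ∀ i j, ∫ ω, (G ω)⁻¹ i j ∂μ = ∫ Y, (wgrm lam Y)⁻¹ i j ∂(gamM n d) := by
    intro i j
    simp_rw [hGZ]
    rw [← hlaw, integral_map hZm.aemeasurable
      (meas_inv (wgrm lam) (meas_wgrm lam) i j).aestronglyMeasurable]
  refine ⟨?_, ?_, ?_⟩
  · filter_upwards [hpos] with ω hω
    exact hω.det_pos.ne'.isUnit
  · rw [htr]
    simp_rw [hIntEq]
    ext i j
    rw [Matrix.of_apply, Matrix.smul_apply, Matrix.one_apply]
    split_ifs with hij
    · subst hij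
      have : ∀ l : Fin n, ∫ Y, (wgrm lam Y)⁻¹ l l ∂(gamM n d)
          = ∫ Y, (wgrm lam Y)⁻¹ i i ∂(gamM n d) := by
        intro l
        rw [wgrm_inv_symm n d lam 1 (fun _ => by simp) (Equiv.swap i l) l l]
        simp
      rw [Finset.sum_congr rfl fun l _ => this l]
      have hn' : (n:ℝ) ≠ 0 := by exact_mod_cast hn.ne'
      simp [hn']
    · have := wgrm_inv_symm n d lam (Function.update 1 i (-1)) (fun k => by
        by_cases hk : k = i
        · subst hk; simp
        · simp [hk]) 1 i j
      simp [Ne.symm hij] at this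
      simp
      linarith
  · rw [htr]
    have hb : ∀ i, ∫ ω, (G ω)⁻¹ i i ∂μ ≤ 1 / ((d:ℝ) * ((d:ℝ) - n - 1)) * ∑ k, (lam k)⁻¹ := by
      intro i
      have hd' : (n:ℝ) + 1 < d := by exact_mod_cast hd
      have hd1 : 0 < (d:ℝ) - n - 1 := by linarith
      have hnn : 0 ≤ 1 / ((d:ℝ) * ((d:ℝ) - n - 1)) * ∑ k, (lam k)⁻¹ :=
        mul_nonneg (by positivity) (Finset.sum_nonneg fun k _ => inv_nonneg.2 (hl k).le)
      rw [← ENNReal.ofReal_le_ofReal_iff hnn, ofReal_integral_eq_lintegral_ofReal (hGinvInt i i)]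
      · refine le_trans (le_of_eq ?_) (wgrm_int n d hd lam hl i)
        simp_rw [hGZ]
        rw [← hlaw, lintegral_map
          (meas_inv (wgrm lam) (meas_wgrm lam) i i).ennreal_ofReal hZm]
      · filter_upwards [hpos] with ω hω
        exact (hω.inv.diag_pos (i := i)).le
    have hSt : (Sig⁻¹).trace = ∑ k, (lam k)⁻¹ := by
      have hDE : Matrix.diagonal lam * Matrix.diagonal (fun k => (lam k)⁻¹) = 1 := by
        rw [Matrix.diagonal_mul_diagonal, ← Matrix.diagonal_one]
        congr 1
        ext k
        exact mul_inv_cancel₀ (hl k).ne'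
      have : Sig⁻¹ = U * Matrix.diagonal (fun k => (lam k)⁻¹) * Uᵀ := by
        refine Matrix.inv_eq_right_inv ?_
        rw [hS]
        calc _ = U * (Matrix.diagonal lam * ((Uᵀ * U) * Matrix.diagonal (fun k => (lam k)⁻¹))) * Uᵀ := by
              simp only [Matrix.mul_assoc]
          _ = 1 := by rw [hU2, Matrix.one_mul, hDE, Matrix.mul_one, hU1]
      rw [this, Matrix.trace_mul_comm, ← Matrix.mul_assoc, hU2, Matrix.one_mul, Matrix.trace_diagonal]
    rw [hSt]
    calc _ ≤ ∑ _i : Fin n, 1 / ((d:ℝ) * ((d:ℝ) - n - 1)) * ∑ k, (lam k)⁻¹ :=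
          Finset.sum_le_sum fun i _ => hb i
      _ = _ := by
          rw [Finset.sum_const, Finset.card_univ, Fintype.card_fin, nsmul_eq_mul, ← mul_assoc,
            mul_one_div]
end

section
/- Let A and B be positive semidefinite d×d matrices, and let the noiseless optimal error with Gaussian covariates of covariance C be Ē(C; 0) := E[ inf_{l ∈ ℝⁿ} ‖X - Σᵢ lᵢ Xᵢ‖² ] where X, X_1,…,X_n are i.i.d. N(0, C), and more generally Ē(C; s²) := E[ inf_l { ‖X - Σᵢ lᵢ Xᵢ‖² + s² ‖l‖² } ]. Then Ē(A + B; 0) ≤ Ē(A; Tr(B)) + Tr(B). -/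
open Matrix MeasureTheory ProbabilityTheory BigOperators

namespace SplitAux

/-- The linear functional with coefficients `w`, `v`. -/
noncomputable def Lf {n d : ℕ} (w : Fin d → ℝ) (v : Fin n → (Fin d → ℝ)) :
    StrongDual ℝ ((Fin d → ℝ) × (Fin n → (Fin d → ℝ))) :=
  LinearMap.toContinuousLinearMap
    { toFun := fun z => w ⬝ᵥ z.1 + ∑ i, v i ⬝ᵥ z.2 i
      map_add' := by
        intro x y
        simp only [Prod.fst_add, Prod.snd_add, Pi.add_apply, dotProduct_add, Finset.sum_add_distrib]
        ring
      map_smul' := by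
        intro c x
        simp only [Prod.smul_fst, Prod.smul_snd, Pi.smul_apply, dotProduct_smul, smul_eq_mul,
          RingHom.id_apply, mul_add, Finset.mul_sum] }

lemma Lf_apply {n d : ℕ} (w : Fin d → ℝ) (v : Fin n → (Fin d → ℝ))
    (z : (Fin d → ℝ) × (Fin n → (Fin d → ℝ))) :
    Lf w v z = w ⬝ᵥ z.1 + ∑ i, v i ⬝ᵥ z.2 i := rfl

lemma dual_rep {d : ℕ} (L : StrongDual ℝ (Fin d → ℝ)) :
    ∃ w : Fin d → ℝ, ∀ x, L x = w ⬝ᵥ x := by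
  refine ⟨fun j => L (Pi.single j 1), fun x => ?_⟩
  conv_lhs => rw [pi_eq_sum_univ' x]
  simp [dotProduct, map_sum, map_smul, mul_comm]

lemma Lf_rep {n d : ℕ} (L : StrongDual ℝ ((Fin d → ℝ) × (Fin n → (Fin d → ℝ)))) :
    ∃ w v, L = Lf w v := by
  obtain ⟨w, hw⟩ := dual_rep (L.comp (.inl ℝ _ _))
  choose v hv using fun i : Fin n => dual_rep ((L.comp (.inr ℝ _ _)).comp
    (ContinuousLinearMap.single ℝ (fun _ : Fin n => Fin d → ℝ) i))
  refine ⟨w, v, ?_⟩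
  refine ContinuousLinearMap.ext fun z => ?_
  rw [Lf_apply, ← hw]
  simp_rw [← hv]
  rw [← L.comp_inl_add_comp_inr]
  congr 1
  simp only [ContinuousLinearMap.comp_apply, ← map_sum]
  congr 2
  ext i : 1
  simp [Finset.sum_apply]

/-- Quadratic form. -/
noncomputable def qf {n d : ℕ} (C : Matrix (Fin d) (Fin d) ℝ)
    (w : Fin d → ℝ) (v : Fin n → (Fin d → ℝ)) : ℝ :=
  w ⬝ᵥ C.mulVec w + ∑ i, v i ⬝ᵥ C.mulVec (v i)

lemma qf_nonneg {n d : ℕ} {C : Matrix (Fin d) (Fin d) ℝ} (hC : C.PosSemidef)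
    (w : Fin d → ℝ) (v : Fin n → (Fin d → ℝ)) : 0 ≤ qf C w v := by
  have h : ∀ w, 0 ≤ w ⬝ᵥ C.mulVec w := fun w => by
    simpa using hC.dotProduct_mulVec_nonneg w
  exact add_nonneg (h w) (Finset.sum_nonneg fun i _ => h _)

lemma charFunDual_of_map {n d : ℕ} {C : Matrix (Fin d) (Fin d) ℝ} (hC : C.PosSemidef)
    (ν : Measure ((Fin d → ℝ) × (Fin n → (Fin d → ℝ)))) (w : Fin d → ℝ) (v : Fin n → (Fin d → ℝ))
    (h : ν.map (Lf w v) = gaussianReal 0 (Real.toNNReal (qf C w v))) :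
    charFunDual ν (Lf w v) = Complex.exp (-(qf C w v : ℂ) / 2) := by
  rw [charFunDual_eq_charFun_map_one, h, charFun_gaussianReal]
  simp [Real.coe_toNNReal _ (qf_nonneg hC w v), neg_div]

lemma exists_rho (n : ℕ) {d : ℕ} {B : Matrix (Fin d) (Fin d) ℝ} (hB : B.PosSemidef) :
    ∃ ρ : Measure ((Fin d → ℝ) × (Fin n → (Fin d → ℝ))), IsProbabilityMeasure ρ ∧
      ∀ w v, charFunDual ρ (Lf w v) = Complex.exp (-(qf B w v : ℂ) / 2) := by
  let β : Measure (Fin d → ℝ) :=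
    (multivariateGaussian 0 B).map (EuclideanSpace.equiv (Fin d) ℝ).toContinuousLinearMap
  have : IsProbabilityMeasure β := Measure.isProbabilityMeasure_map (by fun_prop)
  have hβ : ∀ (w : Fin d → ℝ) (L : StrongDual ℝ (Fin d → ℝ)), (∀ x, L x = w ⬝ᵥ x) →
      charFunDual β L = Complex.exp (-((w ⬝ᵥ B.mulVec w : ℝ) : ℂ) / 2) := by
    intro w L hL
    rw [charFunDual_map]
    have := charFun_multivariateGaussian (μ := 0) hB (WithLp.toLp 2 w)
    rw [charFun_eq_charFunDual_toDualMap] at this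
    have e : L.comp (EuclideanSpace.equiv (Fin d) ℝ).toContinuousLinearMap =
      InnerProductSpace.toDualMap ℝ (EuclideanSpace ℝ (Fin d)) (WithLp.toLp 2 w) := by
      ext1 x
      simp [hL, PiLp.inner_apply, dotProduct, mul_comm]
    rw [e, this]
    simp [neg_div]
  refine ⟨β.prod (Measure.pi fun _ => β), inferInstance, fun w v => ?_⟩
  have key : ∀ (i : Fin n) (x : Fin d → ℝ),
      (((Lf w v).comp (ContinuousLinearMap.inr ℝ (Fin d → ℝ) (Fin n → Fin d → ℝ))).comp
        (ContinuousLinearMap.single ℝ (fun _ : Fin n => Fin d → ℝ) i)) x = v i ⬝ᵥ x := by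
    intro i x
    simp only [ContinuousLinearMap.comp_apply, ContinuousLinearMap.inr_apply,
      Lf_apply, dotProduct_zero, zero_add, ContinuousLinearMap.single_apply]
    rw [Finset.sum_eq_single i] <;> simp +contextual [Pi.single_eq_of_ne]
  rw [charFunDual_prod, charFunDual_pi, hβ w]
  · rw [Finset.prod_congr rfl fun i _ => hβ (v i) _ (key i)]
    · rw [← Complex.exp_sum, ← Complex.exp_add]
      congr 1
      simp only [qf, Complex.ofReal_add, Complex.ofReal_sum, neg_add, add_div]
      rw [← Finset.sum_div, Finset.sum_neg_distrib]
  · intro x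
    simp [Lf_apply]

lemma Lf_smul {n d : ℕ} (u : ℝ) (w : Fin d → ℝ) (v : Fin n → (Fin d → ℝ)) :
    u • Lf w v = Lf (u • w) (u • v) := by
  refine ContinuousLinearMap.ext fun z => ?_
  simp [Lf_apply, mul_add, Finset.mul_sum]

lemma qf_smul {n d : ℕ} (C : Matrix (Fin d) (Fin d) ℝ) (u : ℝ)
    (w : Fin d → ℝ) (v : Fin n → (Fin d → ℝ)) : qf C (u • w) (u • v) = u ^ 2 * qf C w v := by
  simp only [qf, Pi.smul_apply, mulVec_smul, dotProduct_smul, smul_dotProduct, smul_eq_mul,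
    mul_add, Finset.mul_sum]
  congr 1
  · ring
  · exact Finset.sum_congr rfl fun i _ => by ring

lemma map_of_charFunDual {n d : ℕ} {C : Matrix (Fin d) (Fin d) ℝ} (hC : C.PosSemidef)
    (ν : Measure ((Fin d → ℝ) × (Fin n → (Fin d → ℝ)))) [IsProbabilityMeasure ν]
    (h : ∀ w v, charFunDual ν (Lf w v) = Complex.exp (-(qf C w v : ℂ) / 2))
    (w : Fin d → ℝ) (v : Fin n → (Fin d → ℝ)) :
    ν.map (Lf w v) = gaussianReal 0 (Real.toNNReal (qf C w v)) := by
  have : IsProbabilityMeasure (ν.map (Lf w v)) := Measure.isProbabilityMeasure_map (by fun_prop)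
  apply Measure.ext_of_charFun
  ext u
  rw [charFun_map_eq_charFunDual_smul, Lf_smul, h, charFun_gaussianReal, qf_smul,
    Real.coe_toNNReal _ (qf_nonneg hC w v)]
  congr 1
  push_cast
  ring

lemma moment {n d : ℕ} {C : Matrix (Fin d) (Fin d) ℝ} (hC : C.PosSemidef)
    (ν : Measure ((Fin d → ℝ) × (Fin n → (Fin d → ℝ)))) [IsProbabilityMeasure ν]
    (h : ∀ w v, charFunDual ν (Lf w v) = Complex.exp (-(qf C w v : ℂ) / 2))
    (w : Fin d → ℝ) (v : Fin n → (Fin d → ℝ)) (c : ℝ) :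
    Integrable (fun z => (c + Lf w v z) ^ 2) ν ∧
      ∫ z, (c + Lf w v z) ^ 2 ∂ν = c ^ 2 + qf C w v := by
  have hm := map_of_charFunDual hC ν h w v
  set s := Real.toNNReal (qf C w v) with hs
  have i1 : Integrable (fun x : ℝ => x) (gaussianReal 0 s) :=
    (memLp_id_gaussianReal 1).integrable le_rfl
  have i2 : Integrable (fun x : ℝ => x ^ 2) (gaussianReal 0 s) :=
    (memLp_id_gaussianReal 2).integrable_sq
  have v2 : ∫ x, x ^ 2 ∂(gaussianReal 0 s) = qf C w v := by
    have := variance_fun_id_gaussianReal (μ := 0) (v := s)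
    rw [variance_of_integral_eq_zero (by fun_prop) (by simp)] at this
    rw [this, hs, Real.coe_toNNReal _ (qf_nonneg hC w v)]
  have e : (fun x : ℝ => (c + x) ^ 2) = fun x => c ^ 2 + (2 * c * x + x ^ 2) := by
    ext x; ring
  have i3 : Integrable (fun x : ℝ => (c + x) ^ 2) (gaussianReal 0 s) := by
    rw [e]
    exact (integrable_const _).add ((i1.const_mul _).add i2)
  have v3 : ∫ x, (c + x) ^ 2 ∂(gaussianReal 0 s) = c ^ 2 + qf C w v := by
    have i4 : Integrable (fun x : ℝ => 2 * c * x + x ^ 2) (gaussianReal 0 s) :=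
      (i1.const_mul _).add i2
    rw [e, integral_add (integrable_const _) i4,
      integral_add (i1.const_mul _) i2, v2, integral_const_mul]
    simp
  rw [← hm] at i3 v3
  constructor
  · exact (integrable_map_measure (by fun_prop) (by fun_prop)).1 i3
  · rw [← v3, integral_map (by fun_prop) (by fun_prop)]

/-- The objective. -/
noncomputable def obj {n d : ℕ} (t : ℝ) (l : Fin n → ℝ)
    (z : (Fin d → ℝ) × (Fin n → (Fin d → ℝ))) : ℝ :=
  (∑ j, (z.1 j - (∑ i, l i • z.2 i) j) ^ 2) + t * ∑ i, (l i) ^ 2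

lemma obj_nonneg {n d : ℕ} {t : ℝ} (ht : 0 ≤ t) (l : Fin n → ℝ)
    (z : (Fin d → ℝ) × (Fin n → (Fin d → ℝ))) : 0 ≤ obj t l z := by
  unfold obj; positivity

lemma obj_bdd {n d : ℕ} {t : ℝ} (ht : 0 ≤ t)
    (z : (Fin d → ℝ) × (Fin n → (Fin d → ℝ))) :
    BddBelow (Set.range fun l : Fin n → ℝ => obj t l z) :=
  ⟨0, by rintro _ ⟨l, rfl⟩; exact obj_nonneg ht l z⟩

lemma obj_meas {n d : ℕ} {t : ℝ} (ht : 0 ≤ t) :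
    Measurable fun z : (Fin d → ℝ) × (Fin n → (Fin d → ℝ)) => ⨅ l, obj t l z := by
  apply UpperSemicontinuous.measurable
  apply upperSemicontinuous_ciInf (obj_bdd ht)
  intro l
  apply Continuous.upperSemicontinuous
  unfold obj
  simp only [Finset.sum_apply, Pi.smul_apply, smul_eq_mul]
  fun_prop

lemma obj_integral {n d : ℕ} {B : Matrix (Fin d) (Fin d) ℝ} (hB : B.PosSemidef)
    (ρ : Measure ((Fin d → ℝ) × (Fin n → (Fin d → ℝ)))) [IsProbabilityMeasure ρ]
    (h : ∀ w v, charFunDual ρ (Lf w v) = Complex.exp (-(qf B w v : ℂ) / 2))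
    (l : Fin n → ℝ) (y : (Fin d → ℝ) × (Fin n → (Fin d → ℝ))) :
    Integrable (fun b => obj 0 l (y + b)) ρ ∧
      ∫ b, obj 0 l (y + b) ∂ρ = obj B.trace l y + B.trace := by
  have hm := fun j : Fin d => moment hB ρ h (Pi.single j 1) (fun i => -(l i) • Pi.single j 1)
    (y.1 j - (∑ i, l i • y.2 i) j)
  have e : (fun b => obj 0 l (y + b)) = fun b => ∑ j, ((y.1 j - (∑ i, l i • y.2 i) j) +
      Lf (Pi.single j 1) (fun i => -(l i) • Pi.single j 1) b) ^ 2 := by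
    ext b
    simp only [obj, zero_mul, add_zero]
    refine Finset.sum_congr rfl fun j _ => ?_
    congr 1
    simp only [Lf_apply, Prod.fst_add, Prod.snd_add, Pi.add_apply, Finset.sum_apply, Pi.smul_apply,
      smul_eq_mul, mul_add, Finset.sum_add_distrib, single_dotProduct, smul_dotProduct, one_mul,
      neg_mul, Finset.sum_neg_distrib]
    ring
  rw [e]
  refine ⟨integrable_finsetSum _ fun j _ => (hm j).1, ?_⟩
  rw [integral_finsetSum _ fun j _ => (hm j).1, Finset.sum_congr rfl fun j _ => (hm j).2,
    Finset.sum_add_distrib, obj, add_assoc]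
  congr 1
  have : ∀ j, qf B (Pi.single j 1) (fun i => -(l i) • (Pi.single j 1 : Fin d → ℝ)) =
      B j j * (1 + ∑ i, l i ^ 2) := by
    intro j
    simp only [qf, mulVec_smul, dotProduct_smul, smul_dotProduct, single_dotProduct,
      mulVec_single_one, smul_eq_mul, one_mul, mul_add, Finset.mul_sum, mul_one, Matrix.col_apply]
    congr 1
    exact Finset.sum_congr rfl fun i _ => by ring
  simp_rw [this, ← Finset.sum_mul, Matrix.trace, Matrix.diag]
  ring

end SplitAux

open SplitAux in
/-- **Splitting the noiseless Gaussian error.** Let `A, B ⪰ 0`. Let `X, X₁,…,Xₙ` be i.i.d.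
`N(0, A+B)` and `Y, Y₁,…,Yₙ` be i.i.d. `N(0, A)` (each family characterized through its
joint linear marginals). Then the noiseless optimal error at covariance `A+B` is bounded by
the noisy optimal error at covariance `A` with noise level `Tr B`, plus `Tr B`:
`Ē(A+B; 0) ≤ Ē(A; Tr B) + Tr B`. -/
theorem noiseless_error_splitting (n d : ℕ)
    {Ω : Type*} [MeasurableSpace Ω] (μ : Measure Ω) [IsProbabilityMeasure μ]
    (A B : Matrix (Fin d) (Fin d) ℝ) (hA : A.PosSemidef) (hB : B.PosSemidef)
    (X : Ω → (Fin d → ℝ)) (Xi : Fin n → Ω → (Fin d → ℝ))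
    (hXmeas : Measurable X) (hXimeas : ∀ i, Measurable (Xi i))
    (hgaussX : ∀ (w : Fin d → ℝ) (v : Fin n → (Fin d → ℝ)),
      μ.map (fun ω => w ⬝ᵥ X ω + ∑ i, v i ⬝ᵥ Xi i ω) =
        gaussianReal 0 (Real.toNNReal
          (w ⬝ᵥ (A + B).mulVec w + ∑ i, v i ⬝ᵥ (A + B).mulVec (v i))))
    (Y : Ω → (Fin d → ℝ)) (Yi : Fin n → Ω → (Fin d → ℝ))
    (hYmeas : Measurable Y) (hYimeas : ∀ i, Measurable (Yi i))
    (hgaussY : ∀ (w : Fin d → ℝ) (v : Fin n → (Fin d → ℝ)),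
      μ.map (fun ω => w ⬝ᵥ Y ω + ∑ i, v i ⬝ᵥ Yi i ω) =
        gaussianReal 0 (Real.toNNReal
          (w ⬝ᵥ A.mulVec w + ∑ i, v i ⬝ᵥ A.mulVec (v i))))
    (hintX : Integrable
      (fun ω => ⨅ l : Fin n → ℝ, ∑ j, (X ω j - (∑ i, l i • Xi i ω) j) ^ 2) μ)
    (hintY : Integrable
      (fun ω => ⨅ l : Fin n → ℝ,
        ((∑ j, (Y ω j - (∑ i, l i • Yi i ω) j) ^ 2) + B.trace * ∑ i, (l i) ^ 2)) μ) :
    (∫ ω, ⨅ l : Fin n → ℝ, ∑ j, (X ω j - (∑ i, l i • Xi i ω) j) ^ 2 ∂μ) ≤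
      (∫ ω, ⨅ l : Fin n → ℝ,
        ((∑ j, (Y ω j - (∑ i, l i • Yi i ω) j) ^ 2) + B.trace * ∑ i, (l i) ^ 2) ∂μ) +
        B.trace := by
  have htr : 0 ≤ B.trace := hB.trace_nonneg
  have hXp : Measurable fun ω => (X ω, fun i => Xi i ω) :=
    hXmeas.prodMk (measurable_pi_lambda _ hXimeas)
  have hYp : Measurable fun ω => (Y ω, fun i => Yi i ω) :=
    hYmeas.prodMk (measurable_pi_lambda _ hYimeas)
  obtain ⟨ρ, hρ, hρc⟩ := exists_rho n hB
  set ν₁ := μ.map fun ω => (X ω, fun i => Xi i ω) with hν₁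
  set ν₂ := μ.map fun ω => (Y ω, fun i => Yi i ω) with hν₂
  have p₁ : IsProbabilityMeasure ν₁ := Measure.isProbabilityMeasure_map hXp.aemeasurable
  have p₂ : IsProbabilityMeasure ν₂ := Measure.isProbabilityMeasure_map hYp.aemeasurable
  have hc₁ : ∀ w v, charFunDual ν₁ (Lf w v) = Complex.exp (-(qf (A + B) w v : ℂ) / 2) := by
    intro w v
    apply charFunDual_of_map (hA.add hB)
    rw [hν₁, Measure.map_map (by fun_prop) hXp]
    exact hgaussX w v
  have hc₂ : ∀ w v, charFunDual ν₂ (Lf w v) = Complex.exp (-(qf A w v : ℂ) / 2) := by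
    intro w v
    apply charFunDual_of_map hA
    rw [hν₂, Measure.map_map (by fun_prop) hYp]
    exact hgaussY w v
  have hconv : ν₁ = ν₂ ∗ ρ := by
    apply Measure.ext_of_charFunDual
    ext L
    obtain ⟨w, v, rfl⟩ := Lf_rep L
    rw [charFunDual_conv, hc₁, hc₂, hρc, ← Complex.exp_add]
    congr 1
    have : qf (A + B) w v = qf A w v + qf B w v := by
      simp only [qf, add_mulVec, dotProduct_add, Finset.sum_add_distrib]
      ring
    rw [this]
    push_cast
    ring
  have eX : (fun ω => ⨅ l : Fin n → ℝ, ∑ j, (X ω j - (∑ i, l i • Xi i ω) j) ^ 2) =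
      (fun z => ⨅ l, obj 0 l z) ∘ fun ω => (X ω, fun i => Xi i ω) := by
    ext ω
    simp [obj]
  have eY : (fun ω => ⨅ l : Fin n → ℝ,
        ((∑ j, (Y ω j - (∑ i, l i • Yi i ω) j) ^ 2) + B.trace * ∑ i, (l i) ^ 2)) =
      (fun z => ⨅ l, obj B.trace l z) ∘ fun ω => (Y ω, fun i => Yi i ω) := rfl
  have m0 := obj_meas (n := n) (d := d) le_rfl
  have m1 := obj_meas (n := n) (d := d) htr
  rw [eX] at hintX ⊢
  rw [eY] at hintY ⊢
  rw [← integrable_map_measure m0.aestronglyMeasurable hXp.aemeasurable, ← hν₁, hconv] at hintX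
  rw [← integrable_map_measure m1.aestronglyMeasurable hYp.aemeasurable, ← hν₂] at hintY
  have iX := integral_map (μ := μ) hXp.aemeasurable (f := fun z => ⨅ l, obj 0 l z)
    m0.aestronglyMeasurable
  have iY := integral_map (μ := μ) hYp.aemeasurable (f := fun z => ⨅ l, obj B.trace l z)
    m1.aestronglyMeasurable
  simp only [Function.comp_def]
  rw [← iX, ← iY, ← hν₁, ← hν₂, hconv, integral_conv hintX]
  have hi : Integrable (fun y => ∫ b, (⨅ l, obj 0 l (y + b)) ∂ρ) ν₂ := by
    have := (integrable_map_measure m0.aestronglyMeasurable (by fun_prop)).1 hintX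
    exact this.integral_prod_left
  calc _ ≤ ∫ y, ((⨅ l, obj B.trace l y) + B.trace) ∂ν₂ := by
        refine integral_mono hi (hintY.add (integrable_const _)) fun y => ?_
        rw [← sub_le_iff_le_add]
        refine le_ciInf fun l => ?_
        rw [sub_le_iff_le_add]
        obtain ⟨h1, h2⟩ := obj_integral hB ρ hρc l y
        rw [← h2]
        refine integral_mono_of_nonneg (ae_of_all _ fun b => ?_) h1 (ae_of_all _ fun b => ?_)
        · exact Real.iInf_nonneg fun l => obj_nonneg le_rfl l _
        · exact ciInf_le (obj_bdd le_rfl _) l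
    _ = _ := by
        rw [integral_add hintY (integrable_const _)]
        simp
end

section
/- Suppose n > d + 1 (the underparametrized regime) and X, X_1, …, X_n are i.i.d. N(0, Σ) with Σ ∈ ℝ^{d×d} positive definite. Then Ē(Σ; σ²) := E[ inf_{l ∈ ℝⁿ} { ‖X - Σᵢ lᵢ Xᵢ‖² + σ² ‖l‖² } ] satisfies Ē(Σ; σ²) ≤ σ² d / (n - d - 1). -/
open Matrix MeasureTheory ProbabilityTheory BigOperators

lemma aux_charFunDual_pi {ι : Type*} [Fintype ι] [DecidableEq ι] (L : StrongDual ℝ (ι → ℝ)) :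
    charFunDual (Measure.pi (fun _ : ι => gaussianReal 0 1)) L =
      Complex.exp (((-(∑ i, (L (Pi.single i 1)) ^ 2) / 2 : ℝ) : ℂ)) := by
  rw [charFunDual_pi]
  have h : ∀ i, charFunDual (gaussianReal 0 1) (L.comp (.single ℝ (fun _ : ι => ℝ) i)) =
      Complex.exp (((-((L (Pi.single i 1)) ^ 2) / 2 : ℝ) : ℂ)) := by
    intro i
    rw [charFunDual_apply]
    have : ∀ v : ℝ, (L.comp (.single ℝ (fun _ : ι => ℝ) i)) v = L (Pi.single i 1) * v := by
      intro v
      have : (Pi.single i v : ι → ℝ) = v • Pi.single i 1 := by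
        rw [← Pi.single_smul]; simp
      simp [this, mul_comm]
    simp_rw [this]
    have := charFun_gaussianReal (μ := 0) (v := 1) (L (Pi.single i 1))
    rw [charFun_apply_real] at this
    push_cast
    rw [this]
    congr 1
    push_cast
    ring
  simp_rw [h]
  rw [← Complex.exp_sum, ← Complex.ofReal_sum, ← Finset.sum_div, Finset.sum_neg_distrib]

lemma aux_inv_lintegral (s : ℝ) (hs : 0 ≤ s) :
    (ENNReal.ofReal s)⁻¹ = ∫⁻ t in Set.Ioi (0:ℝ), ENNReal.ofReal (Real.exp (-t * s)) := by
  rcases hs.eq_or_lt with h | h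
  · subst h; simp
  · rw [← ofReal_integral_eq_lintegral_ofReal, ← ENNReal.ofReal_inv_of_pos h]
    · congr 1
      have := integral_exp_mul_Ioi (a := -s) (by linarith) 0
      simp only [mul_zero, Real.exp_zero] at this
      rw [← neg_div_neg_eq, neg_neg] at this
      rw [inv_eq_one_div]
      rw [show (fun t => Real.exp (-t * s)) = fun t => Real.exp (-s * t) by ext; ring_nf]
      rw [this]; simp
    · have := integrableOn_exp_mul_Ioi (a := -s) (by linarith) 0
      rw [show (fun t => Real.exp (-t * s)) = fun t => Real.exp (-s * t) by ext; ring_nf]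
      exact this
    · exact ae_of_all _ fun _ => (Real.exp_pos _).le

lemma aux_gauss_exp_sq (t : ℝ) (ht : 0 < t) :
    ∫ x, Real.exp (-t * x ^ 2) ∂(gaussianReal 0 1) = (√(1 + 2 * t))⁻¹ := by
  rw [integral_gaussianReal_eq_integral_smul one_ne_zero]
  have : ∀ x : ℝ, gaussianPDFReal 0 1 x • Real.exp (-t * x ^ 2) =
     (√(2 * Real.pi))⁻¹ * Real.exp (-(t + 1/2) * x ^ 2) := by
    intro x
    simp only [gaussianPDFReal, smul_eq_mul, NNReal.coe_one, mul_one, sub_zero]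
    rw [mul_assoc, ← Real.exp_add]
    congr 2
    ring
  simp_rw [this]
  rw [integral_const_mul, integral_gaussian, ← Real.sqrt_inv, ← Real.sqrt_inv, ← Real.sqrt_mul (by positivity)]
  congr 1
  have := Real.pi_pos
  field_simp
  ring

lemma aux_gauss_exp_sum (k : ℕ) (t : ℝ) (ht : 0 < t) :
    ∫⁻ g, ENNReal.ofReal (Real.exp (-t * ∑ i, (g i) ^ 2))
      ∂(Measure.pi (fun _ : Fin k => gaussianReal 0 1)) =
    ENNReal.ofReal ((1 + 2 * t) ^ (-(k:ℝ) / 2)) := by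
  rw [← ofReal_integral_eq_lintegral_ofReal]
  · congr 1
    simp_rw [Finset.mul_sum, Real.exp_sum]
    rw [integral_fintype_prod_eq_prod (fun (_ : Fin k) x => Real.exp (-t * x ^ 2))]
    simp_rw [aux_gauss_exp_sq t ht]
    rw [Finset.prod_const, Finset.card_univ, Fintype.card_fin, Real.sqrt_eq_rpow,
      ← Real.rpow_neg (by positivity), ← Real.rpow_natCast, ← Real.rpow_mul (by positivity)]
    congr 1; ring
  · refine Integrable.mono' (integrable_const 1)
      (Measurable.aestronglyMeasurable (by fun_prop)) (ae_of_all _ fun g => ?_)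
    rw [Real.norm_of_nonneg (Real.exp_pos _).le, Real.exp_le_one_iff]
    have : 0 ≤ ∑ i, (g i) ^ 2 := Finset.sum_nonneg fun _ _ => sq_nonneg _
    nlinarith
  · exact ae_of_all _ fun _ => (Real.exp_pos _).le

lemma aux_pow_int (k : ℕ) (hk : 2 < k) :
    ∫⁻ t in Set.Ioi (0:ℝ), ENNReal.ofReal ((1 + 2 * t) ^ (-(k:ℝ) / 2)) =
      ENNReal.ofReal (1 / ((k:ℝ) - 2)) := by
  have hk' : (2:ℝ) < k := by exact_mod_cast hk
  have hd : ∀ x ∈ Set.Ici (0:ℝ), HasDerivAt (fun t : ℝ => -((1 + 2 * t) ^ (1 - (k:ℝ) / 2)) / (k - 2))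
      ((1 + 2 * x) ^ (-(k:ℝ) / 2)) x := by
    intro x hx
    have hx : 0 ≤ x := hx
    have h1 : HasDerivAt (fun t : ℝ => 1 + 2 * t) 2 x := by
      simpa using ((hasDerivAt_id x).const_mul 2).const_add 1
    have h2 := ((h1.rpow_const (p := 1 - (k:ℝ)/2) (Or.inl (by positivity))).neg).div_const ((k:ℝ) - 2)
    convert! h2 using 1
    have : (k:ℝ) - 2 ≠ 0 := by linarith
    rw [show 1 - (k:ℝ)/2 - 1 = -(k:ℝ)/2 by ring]
    field_simp
    ring
  have hlim : Filter.Tendsto (fun t : ℝ => -((1 + 2 * t) ^ (1 - (k:ℝ) / 2)) / (k - 2)) Filter.atTop (nhds 0) := by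
    have h0 : Filter.Tendsto (fun t : ℝ => 1 + 2 * t) Filter.atTop Filter.atTop :=
      Filter.tendsto_atTop_add_const_left _ _ (Filter.tendsto_id.const_mul_atTop (by norm_num))
    have := (tendsto_rpow_neg_atTop (y := (k:ℝ)/2 - 1) (by linarith)).comp h0
    have := (this.neg).div_const ((k:ℝ) - 2)
    simp only [neg_zero, zero_div] at this
    refine this.congr fun t => ?_
    simp [neg_sub]
  have hnn : ∀ x ∈ Set.Ioi (0:ℝ), 0 ≤ (1 + 2 * x) ^ (-(k:ℝ) / 2) := by
    intro x hx
    have hx : 0 < x := hx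
    positivity
  rw [← ofReal_integral_eq_lintegral_ofReal]
  · rw [integral_Ioi_of_hasDerivAt_of_nonneg' hd hnn hlim]
    simp [neg_div]
  · exact integrableOn_Ioi_deriv_of_nonneg' hd hnn hlim
  · exact (ae_restrict_iff' measurableSet_Ioi).2 (ae_of_all _ hnn)

lemma aux_inv_chisq (k : ℕ) (hk : 2 < k) :
    ∫⁻ g, (ENNReal.ofReal (∑ i, (g i) ^ 2))⁻¹
      ∂(Measure.pi (fun _ : Fin k => gaussianReal 0 1)) = ENNReal.ofReal (1 / ((k:ℝ) - 2)) := by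
  simp_rw [fun g : Fin k → ℝ => aux_inv_lintegral (∑ i, (g i) ^ 2)
    (Finset.sum_nonneg fun _ _ => sq_nonneg _)]
  rw [lintegral_lintegral_swap, ← aux_pow_int k hk]
  · exact setLIntegral_congr_fun measurableSet_Ioi fun t ht => aux_gauss_exp_sum k t ht
  · apply Measurable.aemeasurable
    simp only [Function.uncurry_def]
    fun_prop

lemma aux_linear_second_moment {ι : Type*} [Fintype ι] [DecidableEq ι] (a : ι → ℝ) :
    ∫ z, (∑ j, z j * a j) ^ 2 ∂(Measure.pi (fun _ : ι => gaussianReal 0 1)) = ∑ j, a j ^ 2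
    ∧ Integrable (fun z : ι → ℝ => (∑ j, z j * a j) ^ 2) (Measure.pi (fun _ : ι => gaussianReal 0 1)) := by
  let L : StrongDual ℝ (ι → ℝ) := ∑ j, a j • ContinuousLinearMap.proj j
  have hL : ∀ z, L z = ∑ j, z j * a j := fun z => by simp [L, mul_comm]
  have hmap : (Measure.pi (fun _ : ι => gaussianReal 0 1)).map L =
      gaussianReal 0 (Real.toNNReal (∑ j, a j ^ 2)) := by
    have : IsProbabilityMeasure ((Measure.pi (fun _ : ι => gaussianReal 0 1)).map L) :=
      Measure.isProbabilityMeasure_map (by fun_prop)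
    apply Measure.ext_of_charFunDual
    ext M
    rw [charFunDual_map, aux_charFunDual_pi, charFunDual_eq_charFun_map_one]
    have hM : (⇑M : ℝ → ℝ) = fun x => M 1 * x := by
      ext x
      have := M.map_smul x 1
      simp only [smul_eq_mul, mul_one] at this
      rw [this, mul_comm]
    rw [hM, gaussianReal_map_const_mul, charFun_gaussianReal]
    congr 1
    have hs : (0:ℝ) ≤ ∑ j, a j ^ 2 := Finset.sum_nonneg fun _ _ => sq_nonneg _
    have : ∀ i, (M.comp L) (Pi.single i 1) = M 1 * a i := by
      intro i
      rw [ContinuousLinearMap.comp_apply, hL, hM]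
      simp [Pi.single_apply]
    simp_rw [this]
    simp [Real.coe_toNNReal _ hs, mul_pow, ← Finset.mul_sum]
    have : (( (∑ j, a j ^ 2).toNNReal : ℝ) : ℂ) = ∑ j, (a j : ℂ) ^ 2 := by
      rw [Real.coe_toNNReal _ hs]; push_cast; rfl
    try rw [this]
    try ring
  have hs : (0:ℝ) ≤ ∑ j, a j ^ 2 := Finset.sum_nonneg fun _ _ => sq_nonneg _
  have hint : Integrable (fun x : ℝ => x ^ 2) (gaussianReal 0 (Real.toNNReal (∑ j, a j ^ 2))) :=
    (memLp_id_gaussianReal 2).integrable_sq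
  have hval : ∫ x, x ^ 2 ∂(gaussianReal 0 (Real.toNNReal (∑ j, a j ^ 2))) = ∑ j, a j ^ 2 := by
    have := variance_id_gaussianReal (μ := 0) (v := Real.toNNReal (∑ j, a j ^ 2))
    rw [variance_of_integral_eq_zero (by fun_prop) (by simp), Real.coe_toNNReal _ hs] at this
    simpa using this
  rw [← hmap] at hint hval
  simp_rw [← hL]
  constructor
  · rw [integral_map (by fun_prop) (by fun_prop)] at hval
    exact hval
  · exact hint.comp_measurable (by fun_prop)

noncomputable def auxD {n m : ℕ} (y : Fin n → ℝ) (o : Fin m → Fin n → ℝ) : ℝ :=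
  ⨅ c : Fin m → ℝ, ∑ i, (y i - ∑ k, c k * o k i) ^ 2

lemma auxD_measurable {n m : ℕ} :
    Measurable (fun p : (Fin n → ℝ) × (Fin m → Fin n → ℝ) => auxD p.1 p.2) := by
  apply UpperSemicontinuous.measurable
  apply upperSemicontinuous_ciInf
  · intro x
    exact ⟨0, by rintro _ ⟨c, rfl⟩; positivity⟩
  · intro c
    apply Continuous.upperSemicontinuous
    fun_prop

lemma auxD_dual {n m : ℕ} (y : Fin n → ℝ) (o : Fin m → Fin n → ℝ) (h : 0 < auxD y o) :
    ∃ u : Fin n → ℝ, (∀ k, ∑ i, u i * o k i = 0) ∧ ∑ i, u i * y i = 1 ∧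
      ∑ i, u i ^ 2 ≤ (auxD y o)⁻¹ := by
  let O : Fin m → EuclideanSpace ℝ (Fin n) := fun k => WithLp.toLp 2 (o k)
  let Y : EuclideanSpace ℝ (Fin n) := WithLp.toLp 2 y
  let K : Submodule ℝ (EuclideanSpace ℝ (Fin n)) := Submodule.span ℝ (Set.range O)
  let p : EuclideanSpace ℝ (Fin n) := K.starProjection Y
  have hp : p ∈ K := K.starProjection_apply_mem Y
  have hr : Y - p ∈ Kᗮ := K.sub_starProjection_mem_orthogonal Y
  set r : EuclideanSpace ℝ (Fin n) := Y - p with hrdef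
  obtain ⟨c, hc⟩ := (Submodule.mem_span_range_iff_exists_fun ℝ).1 hp
  have hD : auxD y o ≤ ∑ i, r i ^ 2 := by
    refine (ciInf_le ⟨0, by rintro _ ⟨c, rfl⟩; positivity⟩ c).trans (le_of_eq ?_)
    refine Finset.sum_congr rfl fun i _ => ?_
    simp [hrdef, ← hc, Y, O]
  have hpos : 0 < ∑ i, r i ^ 2 := h.trans_le hD
  have hin : ∀ a b : EuclideanSpace ℝ (Fin n), inner ℝ a b = ∑ i, b i * a i := by
    intro a b
    simp [PiLp.inner_apply]
  have hO : ∀ k, ∑ i, r i * o k i = 0 := by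
    intro k
    have := (Submodule.mem_orthogonal K r).1 hr (O k) (Submodule.subset_span ⟨k, rfl⟩)
    rw [hin] at this
    exact this
  have hY : ∑ i, r i * y i = ∑ i, r i ^ 2 := by
    have := (Submodule.mem_orthogonal K r).1 hr p hp
    rw [hin] at this
    have h2 : ∀ i, y i = r i + p i := by intro i; simp [hrdef, Y]
    simp_rw [h2, mul_add, Finset.sum_add_distrib, this, add_zero, sq]
  refine ⟨fun i => r i / ∑ i, r i ^ 2, fun k => ?_, ?_, ?_⟩
  · simp_rw [div_mul_eq_mul_div, ← Finset.sum_div, hO, zero_div]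
  · simp_rw [div_mul_eq_mul_div, ← Finset.sum_div, hY]
    exact div_self hpos.ne'
  · simp_rw [div_pow, ← Finset.sum_div]
    rw [sq (∑ i, r i ^ 2), ← div_div, div_self hpos.ne', one_div]
    exact inv_anti₀ h hD

lemma aux_proj_law {n k : ℕ} (b : Fin k → EuclideanSpace ℝ (Fin n)) (hb : Orthonormal ℝ b) :
    (Measure.pi (fun _ : Fin n => gaussianReal 0 1)).map
      (fun y i => ∑ j, y j * b i j) = Measure.pi (fun _ : Fin k => gaussianReal 0 1) := by
  let T : (Fin n → ℝ) →L[ℝ] (Fin k → ℝ) :=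
    ContinuousLinearMap.pi fun i => ∑ j, b i j • ContinuousLinearMap.proj j
  have hT : ⇑T = (fun y i => ∑ j, y j * b i j) := by
    ext y i; simp [T, mul_comm]
  rw [← hT]
  have : IsProbabilityMeasure ((Measure.pi (fun _ : Fin n => gaussianReal 0 1)).map T) :=
    Measure.isProbabilityMeasure_map (by fun_prop)
  apply Measure.ext_of_charFunDual
  ext L
  rw [charFunDual_map, aux_charFunDual_pi, aux_charFunDual_pi]
  congr 4
  let l : Fin k → ℝ := fun i => L (Pi.single i 1)
  have hL : ∀ x, L x = ∑ i, x i * l i := by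
    intro x
    conv_lhs => rw [pi_eq_sum_univ' x]
    simp only [map_sum, map_smul, smul_eq_mul, l]
  let V : EuclideanSpace ℝ (Fin n) := ∑ i, l i • b i
  have hV : ∀ j, (L.comp T) (Pi.single j 1) = V j := by
    intro j
    rw [ContinuousLinearMap.comp_apply, hL, hT]
    simp [Pi.single_apply, V, mul_comm]
  simp_rw [hV]
  have h1 : ∑ j, V j ^ 2 = inner ℝ V V := by
    rw [real_inner_self_eq_norm_sq, EuclideanSpace.real_norm_sq_eq]
  rw [h1, hb.inner_sum]
  simp [l, sq]

lemma auxD_lintegral {n m : ℕ} (hm : m + 2 < n) (o : Fin m → Fin n → ℝ) :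
    ∫⁻ y, (ENNReal.ofReal (auxD y o))⁻¹ ∂(Measure.pi (fun _ : Fin n => gaussianReal 0 1)) ≤
      ENNReal.ofReal (1 / ((n:ℝ) - m - 2)) := by
  let O : Fin m → EuclideanSpace ℝ (Fin n) := fun k => WithLp.toLp 2 (o k)
  let K : Submodule ℝ (EuclideanSpace ℝ (Fin n)) := Submodule.span ℝ (Set.range O)
  let b0 := stdOrthonormalBasis ℝ Kᗮ
  let b : Fin (Module.finrank ℝ Kᗮ) → EuclideanSpace ℝ (Fin n) := fun i => (b0 i : EuclideanSpace ℝ (Fin n))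
  have hb : Orthonormal ℝ b := b0.orthonormal.comp_linearIsometry Kᗮ.subtypeₗᵢ
  have hfin : n ≤ m + Module.finrank ℝ Kᗮ := by
    have h1 := K.finrank_add_finrank_orthogonal
    have h2 : Module.finrank ℝ K ≤ m := by
      have := finrank_range_le_card (R := ℝ) O
      rw [Fintype.card_fin] at this
      exact this
    have h3 : Module.finrank ℝ (EuclideanSpace ℝ (Fin n)) = n := by simp
    omega
  have hle : ∀ y : Fin n → ℝ, ∑ i, (∑ j, y j * b i j) ^ 2 ≤ auxD y o := by
    intro y
    apply le_ciInf
    intro c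
    let Z : EuclideanSpace ℝ (Fin n) := WithLp.toLp 2 y - ∑ k, c k • O k
    have hZ : ∀ i, ∑ j, y j * b i j = inner ℝ (b i) Z := by
      intro i
      have h0 : inner ℝ (b i) (∑ k, c k • O k) = (0:ℝ) := by
        rw [real_inner_comm]
        exact (Submodule.mem_orthogonal K _).1 (b0 i).2 _
          (Submodule.sum_mem _ fun k _ => Submodule.smul_mem _ _ (Submodule.subset_span ⟨k, rfl⟩))
      simp only [Z]
      rw [inner_sub_right, h0]
      simp [PiLp.inner_apply]
    simp_rw [hZ]
    have := hb.sum_inner_products_le (x := Z) (s := Finset.univ)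
    have h2 : ‖Z‖ ^ 2 = ∑ i, (y i - ∑ k, c k * o k i) ^ 2 := by
      rw [EuclideanSpace.real_norm_sq_eq]
      simp [Z, O]
    rw [← h2]
    simpa using this
  calc _ ≤ ∫⁻ y, (ENNReal.ofReal (∑ i, (∑ j, y j * b i j) ^ 2))⁻¹
        ∂(Measure.pi (fun _ : Fin n => gaussianReal 0 1)) :=
        lintegral_mono fun y => ENNReal.inv_le_inv.2 (ENNReal.ofReal_le_ofReal (hle y))
    _ = ∫⁻ g, (ENNReal.ofReal (∑ i, (g i) ^ 2))⁻¹
      ∂(Measure.pi (fun _ : Fin (Module.finrank ℝ Kᗮ) => gaussianReal 0 1)) := by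
        rw [← aux_proj_law b hb, lintegral_map (by fun_prop) (by fun_prop)]
    _ = ENNReal.ofReal (1 / ((Module.finrank ℝ Kᗮ:ℝ) - 2)) :=
        aux_inv_chisq _ (by omega)
    _ ≤ _ := by
      have h1 : (m:ℝ) + 2 < n := by exact_mod_cast hm
      have h2 : (n:ℝ) ≤ m + Module.finrank ℝ Kᗮ := by exact_mod_cast hfin
      apply ENNReal.ofReal_le_ofReal
      apply one_div_le_one_div_of_le <;> linarith

lemma auxD_lintegral_pi {n m : ℕ} (hm : m + 2 < n) (j : Fin (m + 1)) :
    ∫⁻ M, (ENNReal.ofReal (auxD (M j) (fun k => M (j.succAbove k))))⁻¹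
      ∂(Measure.pi (fun _ : Fin (m+1) => Measure.pi (fun _ : Fin n => gaussianReal 0 1))) ≤
      ENNReal.ofReal (1 / ((n:ℝ) - m - 2)) := by
  have hmp := measurePreserving_piFinSuccAbove
    (fun _ : Fin (m+1) => Measure.pi (fun _ : Fin n => gaussianReal 0 1)) j
  have hmeas : Measurable (fun p : (Fin n → ℝ) × (Fin m → Fin n → ℝ) =>
    (ENNReal.ofReal (auxD p.1 p.2))⁻¹) := auxD_measurable.ennreal_ofReal.inv
  have := hmp.lintegral_comp hmeas
  refine (le_of_eq this).trans ?_
  rw [lintegral_prod_symm _ hmeas.aemeasurable]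
  refine (lintegral_mono fun o => auxD_lintegral hm o).trans ?_
  simp

noncomputable def auxG {n d : ℕ} (σ2 : ℝ) (p : (Fin d → ℝ) × (Fin n → Fin d → ℝ)) : ℝ :=
  ⨅ l : Fin n → ℝ, ((∑ j, (p.1 j - (∑ i, l i • p.2 i) j) ^ 2) + σ2 * ∑ i, (l i) ^ 2)

lemma auxG_bdd {n d : ℕ} {σ2 : ℝ} (hσ : 0 ≤ σ2) (p : (Fin d → ℝ) × (Fin n → Fin d → ℝ)) :
    BddBelow (Set.range fun l : Fin n → ℝ =>
      ((∑ j, (p.1 j - (∑ i, l i • p.2 i) j) ^ 2) + σ2 * ∑ i, (l i) ^ 2)) :=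
  ⟨0, by rintro _ ⟨c, rfl⟩; positivity⟩

lemma auxG_nonneg {n d : ℕ} {σ2 : ℝ} (hσ : 0 ≤ σ2) (p : (Fin d → ℝ) × (Fin n → Fin d → ℝ)) :
    0 ≤ auxG σ2 p := le_ciInf fun l => by positivity

lemma auxG_measurable {n d : ℕ} {σ2 : ℝ} (hσ : 0 ≤ σ2) :
    Measurable (auxG (n := n) (d := d) σ2) := by
  apply UpperSemicontinuous.measurable
  apply upperSemicontinuous_ciInf
  · exact auxG_bdd hσ
  · intro c
    apply Continuous.upperSemicontinuous
    simp only [Finset.sum_apply, Pi.smul_apply]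
    fun_prop

/-- the linear map from white noise to the data -/
noncomputable def auxS {n d : ℕ} (B : Matrix (Fin d) (Fin d) ℝ) :
    ((Fin d → Fin n → ℝ) × (Fin d → ℝ)) →L[ℝ] ((Fin d → ℝ) × (Fin n → Fin d → ℝ)) :=
  LinearMap.toContinuousLinearMap
    { toFun := fun p => (fun a => ∑ j, B j a * p.2 j, fun i a => ∑ j, B j a * p.1 j i)
      map_add' := by
        intro p q
        ext <;> simp [mul_add, Finset.sum_add_distrib]
      map_smul' := by
        intro c p
        ext <;> simp [Finset.mul_sum, mul_left_comm] }

lemma auxS_apply {n d : ℕ} (B : Matrix (Fin d) (Fin d) ℝ) (p : (Fin d → Fin n → ℝ) × (Fin d → ℝ)) :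
    auxS B p = (fun a => ∑ j, B j a * p.2 j, fun i a => ∑ j, B j a * p.1 j i) := rfl

lemma auxG_S_le {n d : ℕ} {σ2 : ℝ} (hσ : 0 ≤ σ2) (B : Matrix (Fin d) (Fin d) ℝ)
    (M : Fin d → Fin n → ℝ) (z : Fin d → ℝ) (l : Fin n → ℝ) (hl : ∀ j, ∑ i, l i * M j i = z j) :
    auxG σ2 (auxS B (M, z)) ≤ σ2 * ∑ i, (l i) ^ 2 := by
  refine (ciInf_le (auxG_bdd hσ _) l).trans (le_of_eq ?_)
  have : ∀ a, (auxS B (M, z)).1 a - (∑ i, l i • (auxS B (M, z)).2 i) a = 0 := by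
    intro a
    simp only [auxS_apply, Finset.sum_apply, Pi.smul_apply, smul_eq_mul, ← hl, Finset.mul_sum]
    rw [Finset.sum_comm, sub_eq_zero]
    refine Finset.sum_congr rfl fun i _ => Finset.sum_congr rfl fun j _ => by ring
  simp_rw [this]
  simp

lemma auxG_lintegral_z {n m : ℕ} {σ2 : ℝ} (hσ : 0 ≤ σ2) (B : Matrix (Fin (m+1)) (Fin (m+1)) ℝ)
    (M : Fin (m+1) → Fin n → ℝ) (hM : ∀ j, 0 < auxD (M j) (fun k => M (j.succAbove k))) :
    ∫⁻ z, ENNReal.ofReal (auxG σ2 (auxS B (M, z)))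
      ∂(Measure.pi (fun _ : Fin (m+1) => gaussianReal 0 1)) ≤
    ENNReal.ofReal σ2 * ∑ j, (ENNReal.ofReal (auxD (M j) (fun k => M (j.succAbove k))))⁻¹ := by
  choose u hu1 hu2 hu3 using fun j => auxD_dual (M j) (fun k => M (j.succAbove k)) (hM j)
  have hdual : ∀ j k, ∑ i, u j i * M k i = if j = k then 1 else 0 := by
    intro j k
    split_ifs with h
    · subst h; exact hu2 j
    · obtain ⟨k', rfl⟩ := Fin.exists_succAbove_eq (Ne.symm h)
      exact hu1 j k'
  have hle : ∀ z : Fin (m+1) → ℝ, auxG σ2 (auxS B (M, z)) ≤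
      σ2 * ∑ i, (∑ j, z j * u j i) ^ 2 := by
    intro z
    apply auxG_S_le hσ
    intro k
    simp_rw [Finset.sum_mul]
    rw [Finset.sum_comm]
    simp_rw [mul_assoc, ← Finset.mul_sum, hdual]
    simp
  have hmom := fun i => aux_linear_second_moment (fun j => u j i)
  calc _ ≤ ∫⁻ z, ENNReal.ofReal (σ2 * ∑ i, (∑ j, z j * u j i) ^ 2)
        ∂(Measure.pi (fun _ : Fin (m+1) => gaussianReal 0 1)) :=
        lintegral_mono fun z => ENNReal.ofReal_le_ofReal (hle z)
    _ = ENNReal.ofReal (σ2 * ∑ j, ∑ i, u j i ^ 2) := by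
        rw [← ofReal_integral_eq_lintegral_ofReal]
        · rw [integral_const_mul, integral_finsetSum _ fun i _ => (hmom i).2]
          simp_rw [fun i => (hmom i).1]
          rw [Finset.sum_comm]
        · exact (integrable_finsetSum _ fun i _ => (hmom i).2).const_mul _
        · exact ae_of_all _ fun z => by positivity
    _ ≤ _ := by
        rw [ENNReal.ofReal_mul hσ]
        gcongr
        rw [ENNReal.ofReal_sum_of_nonneg fun _ _ => by positivity]
        gcongr with j
        rw [← ENNReal.ofReal_inv_of_pos (hM j)]
        exact ENNReal.ofReal_le_ofReal (hu3 j)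

lemma auxG_lintegral {n m : ℕ} (hm : m + 2 < n) {σ2 : ℝ} (hσ : 0 ≤ σ2)
    (B : Matrix (Fin (m+1)) (Fin (m+1)) ℝ) :
    ∫⁻ p, ENNReal.ofReal (auxG σ2 (auxS (n := n) B p))
      ∂((Measure.pi (fun _ : Fin (m+1) => Measure.pi (fun _ : Fin n => gaussianReal 0 1))).prod
        (Measure.pi (fun _ : Fin (m+1) => gaussianReal 0 1))) ≤
    ENNReal.ofReal (σ2 * ((m + 1 : ℕ) : ℝ) / ((n:ℝ) - ((m + 1 : ℕ) : ℝ) - 1)) := by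
  have hmeas : ∀ j : Fin (m+1), Measurable fun M : Fin (m+1) → Fin n → ℝ =>
      (ENNReal.ofReal (auxD (M j) (fun k => M (j.succAbove k))))⁻¹ := fun j =>
    ((auxD_measurable.comp (g := fun p : (Fin n → ℝ) × (Fin m → Fin n → ℝ) => auxD p.1 p.2)
      (f := fun M : Fin (m+1) → Fin n → ℝ => (M j, fun k => M (j.succAbove k)))
      (by fun_prop)).ennreal_ofReal).inv
  refine (lintegral_prod_le _).trans ?_
  calc _ ≤ ∫⁻ M, ENNReal.ofReal σ2 *
          ∑ j, (ENNReal.ofReal (auxD (M j) (fun k => M (j.succAbove k))))⁻¹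
        ∂(Measure.pi (fun _ : Fin (m+1) => Measure.pi (fun _ : Fin n => gaussianReal 0 1))) := by
        apply lintegral_mono_ae
        have hae : ∀ j : Fin (m+1), ∀ᵐ M ∂(Measure.pi (fun _ : Fin (m+1) =>
            Measure.pi (fun _ : Fin n => gaussianReal 0 1))),
            (ENNReal.ofReal (auxD (M j) (fun k => M (j.succAbove k))))⁻¹ < ⊤ := fun j =>
          ae_lt_top (hmeas j) ((auxD_lintegral_pi hm j).trans_lt ENNReal.ofReal_lt_top).ne
        filter_upwards [ae_all_iff.2 hae] with M hM
        exact auxG_lintegral_z hσ B M fun j => by simpa using hM j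
    _ = ENNReal.ofReal σ2 * ∑ j : Fin (m+1), ∫⁻ M,
          (ENNReal.ofReal (auxD (M j) (fun k => M (j.succAbove k))))⁻¹
        ∂(Measure.pi (fun _ : Fin (m+1) => Measure.pi (fun _ : Fin n => gaussianReal 0 1))) := by
        rw [lintegral_const_mul _ (Finset.measurable_fun_sum _ fun j _ => hmeas j),
          lintegral_finsetSum _ fun j _ => hmeas j]
    _ ≤ ENNReal.ofReal σ2 * ∑ j : Fin (m+1), ENNReal.ofReal (1 / ((n:ℝ) - m - 2)) := by
        gcongr with j
        exact auxD_lintegral_pi hm j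
    _ = _ := by
        have h1 : (m:ℝ) + 2 < n := by exact_mod_cast hm
        have h2 : 0 ≤ 1 / ((n:ℝ) - m - 2) := one_div_nonneg.2 (by linarith)
        rw [← ENNReal.ofReal_sum_of_nonneg fun _ _ => h2, ← ENNReal.ofReal_mul hσ]
        congr 1
        simp only [Finset.sum_const, Finset.card_univ, Fintype.card_fin, nsmul_eq_mul]
        push_cast
        rw [show (n:ℝ) - (m + 1) - 1 = n - m - 2 by ring]
        ring

lemma aux_law {n d : ℕ} {Ω : Type*} [MeasurableSpace Ω] (μ : Measure Ω) [IsProbabilityMeasure μ]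
    (B : Matrix (Fin d) (Fin d) ℝ)
    (X : Ω → (Fin d → ℝ)) (Xi : Fin n → Ω → (Fin d → ℝ))
    (hXmeas : Measurable X) (hXimeas : ∀ i, Measurable (Xi i))
    (hgauss : ∀ (w : Fin d → ℝ) (v : Fin n → (Fin d → ℝ)),
      μ.map (fun ω => w ⬝ᵥ X ω + ∑ i, v i ⬝ᵥ Xi i ω) =
        gaussianReal 0 (Real.toNNReal
          (w ⬝ᵥ (Bᵀ * B).mulVec w + ∑ i, v i ⬝ᵥ (Bᵀ * B).mulVec (v i)))) :
    μ.map (fun ω => (X ω, fun i => Xi i ω)) =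
      ((Measure.pi (fun _ : Fin d => Measure.pi (fun _ : Fin n => gaussianReal 0 1))).prod
        (Measure.pi (fun _ : Fin d => gaussianReal 0 1))).map (auxS B) := by
  have hT : Measurable (fun ω => (X ω, fun i => Xi i ω)) := by fun_prop
  have : IsProbabilityMeasure (μ.map (fun ω => (X ω, fun i => Xi i ω))) :=
    Measure.isProbabilityMeasure_map hT.aemeasurable
  have : IsProbabilityMeasure
      (((Measure.pi (fun _ : Fin d => Measure.pi (fun _ : Fin n => gaussianReal 0 1))).prod
        (Measure.pi (fun _ : Fin d => gaussianReal 0 1))).map (auxS B)) :=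
    Measure.isProbabilityMeasure_map (by fun_prop)
  apply Measure.ext_of_charFunDual
  ext L
  let w : Fin d → ℝ := fun a => L (Pi.single a 1, 0)
  let v : Fin n → Fin d → ℝ := fun i a => L (0, Pi.single i (Pi.single a 1))
  have hL : ∀ x xs, L (x, xs) = w ⬝ᵥ x + ∑ i, v i ⬝ᵥ xs i := by
    intro x xs
    have h1 : L (x, 0) = w ⬝ᵥ x := by
      have h := pi_eq_sum_univ' x
      have : L.comp (.inl ℝ _ _) x = w ⬝ᵥ x := by
        conv_lhs => rw [h]
        simp only [map_sum, map_smul, smul_eq_mul, dotProduct]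
        refine Finset.sum_congr rfl fun a _ => ?_
        rw [mul_comm]; rfl
      exact this
    have h2 : ∀ i (y : Fin d → ℝ), L (0, Pi.single i y) = v i ⬝ᵥ y := by
      intro i y
      have h := pi_eq_sum_univ' y
      have : (L.comp (.inr ℝ _ _)).comp (.single ℝ (fun _ : Fin n => Fin d → ℝ) i) y = v i ⬝ᵥ y := by
        conv_lhs => rw [h]
        simp only [map_sum, map_smul, smul_eq_mul, dotProduct]
        refine Finset.sum_congr rfl fun a _ => ?_
        rw [mul_comm]; rfl
      exact this
    have h3 : L (0, xs) = ∑ i, v i ⬝ᵥ xs i := by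
      have : L.comp (.inr ℝ _ _) xs = ∑ i, v i ⬝ᵥ xs i := by
        rw [← (L.comp (.inr ℝ _ _)).sum_comp_single]
        exact Finset.sum_congr rfl fun i _ => h2 i (xs i)
      exact this
    rw [← h1, ← h3, ← map_add]; simp
  have hquad : ∀ x : Fin d → ℝ, x ⬝ᵥ (Bᵀ * B).mulVec x = ∑ j, (B.mulVec x j) ^ 2 := by
    intro x
    rw [← Matrix.mulVec_mulVec, Matrix.dotProduct_mulVec, Matrix.vecMul_transpose]
    simp [dotProduct, sq]
  -- left
  rw [charFunDual_eq_charFun_map_one, Measure.map_map (by fun_prop) hT]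
  have hcomp : (⇑L ∘ fun ω => (X ω, fun i => Xi i ω)) =
      fun ω => w ⬝ᵥ X ω + ∑ i, v i ⬝ᵥ Xi i ω := by
    ext ω; exact hL _ _
  rw [hcomp, hgauss, charFun_gaussianReal]
  simp_rw [hquad]
  have hs : 0 ≤ ∑ j, (B.mulVec w j) ^ 2 + ∑ i, ∑ j, (B.mulVec (v i) j) ^ 2 := by positivity
  rw [Real.coe_toNNReal _ hs]
  -- right
  rw [charFunDual_map, charFunDual_prod, charFunDual_pi, aux_charFunDual_pi]
  simp_rw [aux_charFunDual_pi]
  have e1 : ∀ j, ((L.comp (auxS B)).comp (.inr ℝ (Fin d → Fin n → ℝ) (Fin d → ℝ)))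
      (Pi.single j 1) = B.mulVec w j := by
    intro j
    change L (auxS B (0, Pi.single j 1)) = _
    rw [auxS_apply, hL]
    simp [dotProduct, mulVec, Pi.single_apply, mul_comm]
  have e2 : ∀ j i, (((L.comp (auxS B)).comp (.inl ℝ (Fin d → Fin n → ℝ) (Fin d → ℝ))).comp
      (.single ℝ (fun _ : Fin d => Fin n → ℝ) j)) (Pi.single i 1) = B.mulVec (v i) j := by
    intro j i
    change L (auxS B (Pi.single j (Pi.single i 1), 0)) = _
    rw [auxS_apply, hL]
    have : ∀ (i' : Fin n) (a : Fin d), ∑ x, B x a * (Pi.single j (Pi.single i (1:ℝ)) : Fin d → Fin n → ℝ) x i'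
        = B j a * (if i' = i then 1 else 0) := by
      intro i' a
      rw [Finset.sum_eq_single j]
      · simp [Pi.single_apply]
      · intro x _ hx
        simp [Pi.single_eq_of_ne hx]
      · simp
    simp only [this]
    rw [Finset.sum_eq_single i]
    · simp [dotProduct, mulVec, mul_comm]
    · intro x _ hx
      simp [dotProduct, hx]
    · simp
  simp_rw [e1, e2]
  rw [← Complex.exp_sum, ← Complex.exp_add, ← Complex.ofReal_sum, ← Complex.ofReal_add]
  congr 1
  rw [Finset.sum_comm (γ := Fin n), ← Finset.sum_div, Finset.sum_neg_distrib]
  push_cast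
  ring


open scoped MatrixOrder Matrix.Norms.L2Operator in
lemma aux_factor {d : ℕ} (S : Matrix (Fin d) (Fin d) ℝ) (h : S.PosSemidef) :
    ∃ B : Matrix (Fin d) (Fin d) ℝ, S = Bᵀ * B := by
  obtain ⟨B, hB⟩ := CStarAlgebra.nonneg_iff_eq_star_mul_self.mp h.nonneg
  exact ⟨B, by rw [hB, Matrix.star_eq_conjTranspose, Matrix.conjTranspose_eq_transpose_of_trivial]⟩

/-- **Underparametrized Gaussian bound.** Let `X, X₁,…,Xₙ` be i.i.d. `N(0,Σ)` in `ℝᵈ`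
(characterized through joint linear marginals) with `Σ ≻ 0` and `n > d + 1`. Then the
optimal averaged excess risk of linear prediction rules satisfies
`Ē(Σ; σ²) = E[ inf_l { ‖X - Σᵢ lᵢXᵢ‖² + σ² ‖l‖² } ] ≤ σ² d/(n - d - 1)`. -/
theorem underparametrized_gaussian_bound (n d : ℕ) (hnd : d + 1 < n)
    {Ω : Type*} [MeasurableSpace Ω] (μ : Measure Ω) [IsProbabilityMeasure μ]
    (Sig : Matrix (Fin d) (Fin d) ℝ) (hSig : Sig.PosDef) (σ2 : ℝ) (hσ2 : 0 ≤ σ2)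
    (X : Ω → (Fin d → ℝ)) (Xi : Fin n → Ω → (Fin d → ℝ))
    (hXmeas : Measurable X) (hXimeas : ∀ i, Measurable (Xi i))
    (hgauss : ∀ (w : Fin d → ℝ) (v : Fin n → (Fin d → ℝ)),
      μ.map (fun ω => w ⬝ᵥ X ω + ∑ i, v i ⬝ᵥ Xi i ω) =
        gaussianReal 0 (Real.toNNReal
          (w ⬝ᵥ Sig.mulVec w + ∑ i, v i ⬝ᵥ Sig.mulVec (v i))))
    (hint : Integrable
      (fun ω => ⨅ l : Fin n → ℝ,
        ((∑ j, (X ω j - (∑ i, l i • Xi i ω) j) ^ 2) + σ2 * ∑ i, (l i) ^ 2)) μ) :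
    (∫ ω, ⨅ l : Fin n → ℝ,
        ((∑ j, (X ω j - (∑ i, l i • Xi i ω) j) ^ 2) + σ2 * ∑ i, (l i) ^ 2) ∂μ) ≤
      σ2 * (d : ℝ) / ((n : ℝ) - (d : ℝ) - 1) := by
  have hT : Measurable (fun ω => (X ω, fun i => Xi i ω)) := by fun_prop
  obtain ⟨B, hB⟩ := aux_factor Sig hSig.posSemidef
  subst hB
  change ∫ ω, auxG σ2 (X ω, fun i => Xi i ω) ∂μ ≤ _
  have hpos : (0:ℝ) < (n:ℝ) - d - 1 := by
    have : (d:ℝ) + 1 < n := by exact_mod_cast hnd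
    linarith
  have hrhs : 0 ≤ σ2 * (d : ℝ) / ((n : ℝ) - (d : ℝ) - 1) := by positivity
  rw [integral_eq_lintegral_of_nonneg_ae (ae_of_all _ fun ω => auxG_nonneg hσ2 _)
    ((auxG_measurable hσ2).comp hT).aestronglyMeasurable]
  apply ENNReal.toReal_le_of_le_ofReal hrhs
  have hG := (auxG_measurable (n := n) (d := d) hσ2).ennreal_ofReal
  rw [← lintegral_map (f := fun p => ENNReal.ofReal (auxG σ2 p)) hG hT,
    aux_law μ B X Xi hXmeas hXimeas hgauss, lintegral_map hG (by fun_prop)]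
  rcases d with _ | m
  · refine (le_of_eq ?_).trans (zero_le)
    have h0 : ∀ p, ENNReal.ofReal (auxG σ2 (auxS (n := n) B p)) = 0 := fun p => by
      have := auxG_S_le hσ2 B p.1 p.2 0 (fun j => j.elim0)
      simpa using this
    simp only [h0, lintegral_zero]
  · exact auxG_lintegral (by omega) hσ2 B
end
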